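/- arXiv:2212.07974 — 2 statements merged into one kernel-verified Lean document; each statement's English description precedes it below -/
import Mathlib

section
/- For every α ∈ (0,1), every γ > 0, every β ∈ ℝ and every x ≥ 0, one has the fractional integration identity φ(-α, β, -x) = (1/Γ(γ)) · ∫_x^∞ φ(-α, β − αγ, -t) · (t − x)^{γ−1} dt, the integral being absolutely convergent. -/
open MeasureTheory

/-- The Wright function `φ(ρ, β, x) = ∑ x^n / (n! Γ(β + ρ n))`. -/
noncomputable def wright (ρ β x : ℝ) : ℝ :=
  ∑' n : ℕ, x ^ n / ((n.factorial : ℝ) * Real.Gamma (β + ρ * n))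

/-- logarithm of the point `1 + i y` on the vertical line. -/
noncomputable def wL (y : ℝ) : ℂ := Complex.log (1 + y * Complex.I)

noncomputable def wD (y : ℝ) : ℂ := Complex.I / (1 + y * Complex.I)

lemma w_re (y : ℝ) : (1 + y * Complex.I : ℂ).re = 1 := by simp

lemma w_ne (y : ℝ) : (1 + y * Complex.I : ℂ) ≠ 0 := by
  intro h
  have := congrArg Complex.re h
  simp at this

lemma w_slit (y : ℝ) : (1 + y * Complex.I : ℂ) ∈ Complex.slitPlane := by
  left; simp

lemma wL_exp (y : ℝ) : Complex.exp (wL y) = 1 + y * Complex.I := Complex.exp_log (w_ne y)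

lemma wL_hasDeriv (y : ℝ) : HasDerivAt wL (wD y) y := by
  have h : HasDerivAt (fun y : ℝ => (1 + y * Complex.I : ℂ)) (Complex.I) y := by
    have := ((Complex.ofRealCLM.hasDerivAt (x := y)).mul_const Complex.I).const_add (1:ℂ)
    simpa using this
  exact h.clog_real (w_slit y)

lemma wL_cont : Continuous wL :=
  continuous_iff_continuousAt.2 fun y => (wL_hasDeriv y).continuousAt

lemma wD_cont : Continuous wD := by
  unfold wD
  exact Continuous.div (by fun_prop) (by fun_prop) w_ne

lemma w_normSq (y : ℝ) : ‖(1 + y * Complex.I : ℂ)‖ ^ 2 = 1 + y ^ 2 := by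
  rw [← Complex.normSq_eq_norm_sq]
  simp [Complex.normSq_apply]; ring

lemma w_norm (y : ℝ) : ‖(1 + y * Complex.I : ℂ)‖ = Real.exp (wL y).re := by
  rw [← wL_exp, Complex.norm_exp]

lemma wL_exp_two (y : ℝ) : Real.exp (2 * (wL y).re) = 1 + y ^ 2 := by
  rw [← w_normSq, w_norm, ← Real.exp_nat_mul]; simp

lemma wL_re_nonneg (y : ℝ) : 0 ≤ (wL y).re := by
  have h := wL_exp_two y
  have : 1 ≤ Real.exp (2 * (wL y).re) := by rw [h]; nlinarith [sq_nonneg y]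
  have := Real.one_le_exp_iff.1 this
  linarith

lemma wD_norm (y : ℝ) : ‖wD y‖ ≤ 1 := by
  unfold wD
  rw [norm_div, w_norm, Complex.norm_I]
  rw [div_le_one (Real.exp_pos _)]
  exact Real.one_le_exp (wL_re_nonneg y)

lemma wL_im_lt (y : ℝ) : |(wL y).im| < Real.pi / 2 := by
  unfold wL
  rw [Complex.log_im, Complex.abs_arg_lt_pi_div_two_iff]
  left; simp

lemma wL_cos (y : ℝ) : Real.exp (wL y).re * Real.cos (wL y).im = 1 := by
  have := congrArg Complex.re (wL_exp y)
  rw [Complex.exp_re] at this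
  simpa using this

lemma wL_norm_le (y : ℝ) : ‖wL y‖ ≤ 2 * Real.exp (wL y).re := by
  have h1 := Complex.norm_le_abs_re_add_abs_im (wL y)
  have h2 := wL_im_lt y
  rw [abs_of_nonneg (wL_re_nonneg y)] at h1
  have h3 := Real.add_one_le_exp (wL y).re
  have h4 := Real.pi_lt_four
  have := wL_re_nonneg y
  linarith

/-- real multiples -/
lemma re_exp_mul (p y : ℝ) : (Complex.exp (p * wL y)).re =
    Real.exp (p * (wL y).re) * Real.cos (p * (wL y).im) := by
  rw [Complex.exp_re]; simp

lemma norm_exp_mul (p y : ℝ) : ‖Complex.exp (p * wL y)‖ = Real.exp (p * (wL y).re) := by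
  rw [Complex.norm_exp]; simp

lemma boundB (p1 p2 : ℝ) (h1 : 1 < p1) (h2 : p2 < 3) : ∃ c A : ℝ, 0 < c ∧
    ∀ p, p1 ≤ p → p ≤ p2 → ∀ y, (Complex.exp (p * wL y)).re ≤ A - c * Real.exp (p1 * (wL y).re) := by
  have hpi := Real.pi_pos
  set θ0 : ℝ := (Real.pi / 2) * (1 + 1 / p1) / 2 with hθ0
  have hip : 1 / p1 < 1 := by rw [div_lt_one (by linarith)]; exact h1
  have hip0 : 0 < 1 / p1 := by positivity
  have hθ0_lt : θ0 < Real.pi / 2 := by rw [hθ0]; nlinarith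
  have hθ0_pos : 0 < θ0 := by positivity
  have hpθ : Real.pi / 2 < p1 * θ0 := by
    have : p1 * θ0 = (Real.pi / 2) * (p1 + 1) / 2 := by rw [hθ0]; field_simp
    rw [this]; nlinarith
  set δ : ℝ := max (Real.pi - p1 * θ0) (p2 * (Real.pi / 2) - Real.pi) with hδ
  have hδ_lt : δ < Real.pi / 2 := by
    apply max_lt
    · linarith
    · nlinarith
  set δ' := max δ 0
  have hδ'_lt : δ' < Real.pi / 2 := max_lt hδ_lt (by linarith)
  have hδ'0 : 0 ≤ δ' := le_max_right _ _
  set c := Real.cos δ' with hc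
  have hcpos : 0 < c := Real.cos_pos_of_mem_Ioo ⟨by linarith, hδ'_lt⟩
  have hcos0 : 0 < Real.cos θ0 := Real.cos_pos_of_mem_Ioo ⟨by linarith, hθ0_lt⟩
  set R0 : ℝ := Real.log (1 / Real.cos θ0) with hR0
  refine ⟨c, (1 + c) * Real.exp (3 * R0), hcpos, ?_⟩
  intro p hp1 hp2 y
  have hR := wL_re_nonneg y
  have him := wL_im_lt y
  rw [re_exp_mul]
  have hmono : Real.exp (p1 * (wL y).re) ≤ Real.exp (p * (wL y).re) := by
    apply Real.exp_le_exp.2; nlinarith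
  have hcosabs : Real.cos (p * (wL y).im) = Real.cos (p * |(wL y).im|) := by
    rw [← Real.cos_abs, abs_mul, abs_of_pos (by linarith : 0 < p)]
  by_cases hcase : θ0 ≤ |(wL y).im|
  · have hle : Real.cos (p * (wL y).im) ≤ -c := by
      rw [hcosabs]
      have e : Real.cos (p * |(wL y).im|) = - Real.cos |p * |(wL y).im| - Real.pi| := by
        rw [Real.cos_abs, Real.cos_sub_pi]; ring
      rw [e, neg_le_neg_iff, hc]
      apply Real.cos_le_cos_of_nonneg_of_le_pi (abs_nonneg _) (by linarith)
      apply le_trans _ (le_max_left _ _)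
      rw [abs_le']
      constructor
      · apply le_trans _ (le_max_right _ _)
        have : p * |(wL y).im| ≤ p2 * (Real.pi / 2) := by
          apply mul_le_mul hp2 him.le (abs_nonneg _) (by linarith)
        linarith
      · apply le_trans _ (le_max_left _ _)
        have : p1 * θ0 ≤ p * |(wL y).im| := by
          apply mul_le_mul hp1 hcase hθ0_pos.le (by linarith)
        linarith
    have hA : 0 ≤ (1 + c) * Real.exp (3 * R0) := by positivity
    have := mul_le_mul_of_nonneg_left hle (Real.exp_pos (p * (wL y).re)).le
    nlinarith
  · push Not at hcase
    have hcosle : Real.cos θ0 ≤ Real.cos (wL y).im := by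
      rw [← Real.cos_abs (wL y).im]
      exact Real.cos_le_cos_of_nonneg_of_le_pi (abs_nonneg _) (by linarith) hcase.le
    have hRle : (wL y).re ≤ R0 := by
      rw [hR0, Real.le_log_iff_exp_le (by positivity), le_div_iff₀ hcos0]
      rw [← wL_cos y]
      exact mul_le_mul_of_nonneg_left hcosle (Real.exp_pos _).le
    have hE : Real.exp (p * (wL y).re) ≤ Real.exp (3 * R0) := by
      apply Real.exp_le_exp.2; nlinarith
    have hc1 := Real.cos_le_one (p * (wL y).im)
    have := mul_le_mul_of_nonneg_left hc1 (Real.exp_pos (p * (wL y).re)).le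
    nlinarith

lemma boundD (N b c r q : ℝ) (hr : 0 < r) (hrq : r < q) (hc : 0 < c) :
    ∃ C, ∀ R : ℝ, 0 ≤ R → N * R + b * Real.exp (r * R) - c * Real.exp (q * R) ≤ C := by
  set M : ℝ := |N| / r + |b| + c with hM
  have hMpos : 0 < M := by positivity
  set R1 : ℝ := Real.log (M / c) / (q - r) with hR1
  refine ⟨M * Real.exp (r * |R1|), ?_⟩
  intro R hR
  have h1 : N * R ≤ |N| / r * Real.exp (r * R) := by
    have := Real.add_one_le_exp (r * R)
    have h2 : N * R ≤ |N| * R := mul_le_mul_of_nonneg_right (le_abs_self N) hR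
    have h3 : |N| * R = |N| / r * (r * R) := by field_simp
    rw [h3] at h2
    exact h2.trans (mul_le_mul_of_nonneg_left (by linarith) (by positivity))
  have h2 : b * Real.exp (r * R) ≤ |b| * Real.exp (r * R) :=
    mul_le_mul_of_nonneg_right (le_abs_self b) (Real.exp_pos _).le
  have h3 : N * R + b * Real.exp (r * R) ≤ M * Real.exp (r * R) := by
    have := mul_pos hc (Real.exp_pos (r * R))
    rw [hM]; nlinarith
  have hqr : 0 < q - r := by linarith
  by_cases hcase : R ≤ R1
  · have : Real.exp (r * R) ≤ Real.exp (r * |R1|) :=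
      Real.exp_le_exp.2 (mul_le_mul_of_nonneg_left (hcase.trans (le_abs_self _)) hr.le)
    have := mul_le_mul_of_nonneg_left this hMpos.le
    have := mul_pos hc (Real.exp_pos (q * R))
    linarith
  · push Not at hcase
    have h4 : M / c ≤ Real.exp ((q - r) * R) := by
      rw [← Real.log_le_iff_le_exp (by positivity)]
      rw [hR1, div_lt_iff₀ hqr] at hcase
      linarith
    have h5 : Real.exp (q * R) = Real.exp ((q - r) * R) * Real.exp (r * R) := by
      rw [← Real.exp_add]; ring_nf
    rw [div_le_iff₀ hc] at h4
    have h6 := mul_le_mul_of_nonneg_right h4 (Real.exp_pos (r * R)).le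
    have : 0 < M * Real.exp (r * |R1|) := by positivity
    rw [h5]; nlinarith

lemma master (p1 p2 N b r : ℝ) (h1 : 1 < p1) (h2 : p2 < 3) (hr : 0 < r) (hrp : r < p1) :
    ∃ C, ∀ p, p1 ≤ p → p ≤ p2 → ∀ y, (Complex.exp (p * wL y)).re + N * (wL y).re
      + b * Real.exp (r * (wL y).re) ≤ C - 2 * (wL y).re := by
  obtain ⟨c, A, hc, hB⟩ := boundB p1 p2 h1 h2
  obtain ⟨C, hC⟩ := boundD (N + 2) b c r p1 hr hrp hc
  refine ⟨A + C, fun p hp1 hp2 y => ?_⟩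
  have := hB p hp1 hp2 y
  have := hC _ (wL_re_nonneg y)
  linarith

lemma dom_integrable (C : ℝ) : Integrable (fun y => Real.exp (C - 2 * (wL y).re)) := by
  have : (fun y => Real.exp (C - 2 * (wL y).re)) = fun y : ℝ => Real.exp C * (1 + y ^ 2)⁻¹ := by
    ext y
    rw [← wL_exp_two, ← Real.exp_neg, ← Real.exp_add]; ring_nf
  rw [this]
  exact integrable_inv_one_add_sq.const_mul _

/-- integrand `exp(s) s^{1-z}` in logarithmic coordinates. -/
noncomputable def wG (z p y : ℝ) : ℂ := Complex.exp (Complex.exp (p * wL y) + (1 - z) * (p * wL y))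

lemma wG_norm (z p y : ℝ) : ‖wG z p y‖ = Real.exp ((Complex.exp (p * wL y)).re + (1 - z) * p * (wL y).re) := by
  unfold wG
  rw [Complex.norm_exp, Complex.add_re]
  congr 2
  have : ((1 : ℂ) - z) * (p * wL y) = (((1 - z) * p : ℝ) : ℂ) * wL y := by push_cast; ring
  rw [this, Complex.re_ofReal_mul]

lemma wG_cont (z p : ℝ) : Continuous (wG z p) := by
  unfold wG
  have := wL_cont
  fun_prop

/-- uniform polynomially weighted bound -/
lemma wG_bound (z N p1 p2 : ℝ) (h1 : 1 < p1) (h2 : p2 < 3) : ∃ C, ∀ p, p1 ≤ p → p ≤ p2 → ∀ y,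
    ‖wG z p y‖ * Real.exp (N * (wL y).re) ≤ Real.exp (C - 2 * (wL y).re) := by
  obtain ⟨C, hC⟩ := master p1 p2 (3 * |1 - z| + N) 0 1 h1 h2 one_pos h1
  refine ⟨C, fun p hp1 hp2 y => ?_⟩
  rw [wG_norm, ← Real.exp_add, Real.exp_le_exp]
  have := hC p hp1 hp2 y
  have h3 : (1 - z) * p ≤ 3 * |1 - z| := by
    nlinarith [le_abs_self (1 - z), abs_nonneg (1 - z)]
  have := mul_le_mul_of_nonneg_right h3 (wL_re_nonneg y)
  linarith

lemma wG_int (z p : ℝ) (h1 : 1 < p) (h2 : p < 3) (f : ℝ → ℂ) (hf : Continuous f) (M N : ℝ)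
    (hM : ∀ y, ‖f y‖ ≤ M * Real.exp (N * (wL y).re)) : Integrable (fun y => wG z p y * f y) := by
  obtain ⟨C, hC⟩ := wG_bound z N p p h1 h2
  refine ((dom_integrable C).const_mul M).mono' ((wG_cont z p).mul hf).aestronglyMeasurable ?_
  refine Filter.Eventually.of_forall fun y => ?_
  have hM0 : 0 ≤ M := by
    have := (norm_nonneg _).trans (hM y)
    exact nonneg_of_mul_nonneg_left this (Real.exp_pos _)
  rw [norm_mul]
  calc _ ≤ ‖wG z p y‖ * (M * Real.exp (N * (wL y).re)) :=
        mul_le_mul_of_nonneg_left (hM y) (norm_nonneg _)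
    _ = M * (‖wG z p y‖ * Real.exp (N * (wL y).re)) := by ring
    _ ≤ _ := mul_le_mul_of_nonneg_left (hC p le_rfl le_rfl y) hM0

noncomputable def wK (z p : ℝ) : ℂ := ∫ y, wG z p y * (p * wD y)

lemma pD_norm (p y : ℝ) : ‖(p : ℂ) * wD y‖ ≤ |p| * Real.exp (0 * (wL y).re) := by
  rw [norm_mul, zero_mul, Real.exp_zero, Complex.norm_real, Real.norm_eq_abs]
  exact mul_le_mul_of_nonneg_left (wD_norm y) (abs_nonneg _)

lemma wK_int (z p : ℝ) (h1 : 1 < p) (h2 : p < 3) :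
    Integrable (fun y => wG z p y * (p * wD y)) :=
  wG_int z p h1 h2 _ (continuous_const.mul wD_cont) _ 0 (pD_norm p)

lemma wG_hasDeriv_y (z p y : ℝ) : HasDerivAt (wG z p)
    (wG z p y * ((Complex.exp (p * wL y) + (1 - z)) * (p * wD y))) y := by
  have h0 : HasDerivAt (fun y => (p : ℂ) * wL y) (p * wD y) y := (wL_hasDeriv y).const_mul _
  have := (h0.cexp.add (h0.const_mul ((1 : ℂ) - z))).cexp
  refine HasDerivAt.congr_deriv (f := wG z p) this ?_
  change wG z p y * _ = _
  ring

lemma wG_hasDeriv_p (z p y : ℝ) : HasDerivAt (fun p => wG z p y)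
    (wG z p y * ((Complex.exp (p * wL y) + (1 - z)) * wL y)) p := by
  have h0 : HasDerivAt (fun p : ℝ => (p : ℂ) * wL y) (wL y) p := by
    simpa using (Complex.ofRealCLM.hasDerivAt (x := p)).mul_const (wL y)
  have := (h0.cexp.add (h0.const_mul ((1 : ℂ) - z))).cexp
  refine HasDerivAt.congr_deriv (f := fun p => wG z p y) this ?_
  change wG z p y * _ = _
  ring

lemma factor_norm (z p y : ℝ) (h1 : 1 < p) (h2 : p < 3) :
    ‖Complex.exp (p * wL y) + (1 - z)‖ ≤ (1 + |1 - z|) * Real.exp (3 * (wL y).re) := by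
  have hR := wL_re_nonneg y
  have h3 : ‖Complex.exp (p * wL y)‖ ≤ Real.exp (3 * (wL y).re) := by
    rw [norm_exp_mul, Real.exp_le_exp]; nlinarith
  have h4 : ‖(1 : ℂ) - z‖ = |1 - z| := by
    rw [← Real.norm_eq_abs, ← Complex.norm_real]; simp
  have h5 : 1 ≤ Real.exp (3 * (wL y).re) := Real.one_le_exp (by linarith)
  have := norm_add_le (Complex.exp (p * wL y)) (1 - z)
  rw [h4] at this
  nlinarith [abs_nonneg (1 - z)]

/-- the derivative in `p` -/
noncomputable def wGp (z p y : ℝ) : ℂ :=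
  wG z p y * (((Complex.exp (p * wL y) + (1 - z)) * wL y) * (p * wD y) + wD y)

lemma wGp_factor (z p y : ℝ) (h1 : 1 < p) (h2 : p < 3) :
    ‖((Complex.exp (p * wL y) + (1 - z)) * wL y) * (p * wD y) + wD y‖ ≤
      (6 * (1 + |1 - z|) + 1) * Real.exp (4 * (wL y).re) := by
  have hR := wL_re_nonneg y
  have ha := factor_norm z p y h1 h2
  have hb := wL_norm_le y
  have hc : ‖(p : ℂ) * wD y‖ ≤ 3 := by
    have := pD_norm p y
    rw [zero_mul, Real.exp_zero, abs_of_pos (by linarith)] at this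
    linarith
  have hd := wD_norm y
  have he : 1 ≤ Real.exp (4 * (wL y).re) := Real.one_le_exp (by linarith)
  have h5 : Real.exp (4 * (wL y).re) = Real.exp (3 * (wL y).re) * Real.exp (wL y).re := by
    rw [← Real.exp_add]; ring_nf
  have hz : 0 ≤ |1 - z| := abs_nonneg _
  calc _ ≤ ‖Complex.exp (p * wL y) + (1 - z)‖ * ‖wL y‖ * ‖(p : ℂ) * wD y‖ + ‖wD y‖ := by
        refine (norm_add_le _ _).trans_eq ?_
        rw [norm_mul, norm_mul]
    _ ≤ ((1 + |1 - z|) * Real.exp (3 * (wL y).re)) * (2 * Real.exp (wL y).re) * 3 + 1 := by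
        gcongr
    _ = 6 * (1 + |1 - z|) * Real.exp (4 * (wL y).re) + 1 := by rw [h5]; ring
    _ ≤ _ := by nlinarith

lemma wK_const (z p q : ℝ) (hp : p ∈ Set.Ioo (1:ℝ) 3) (hq : q ∈ Set.Ioo (1:ℝ) 3) :
    wK z p = wK z q := by
  have key : ∀ p ∈ Set.Ioo (1:ℝ) 3, HasDerivAt (wK z) 0 p := by
    intro p hp
    set p1 := (1 + p) / 2 with hp1
    set p2 := (p + 3) / 2 with hp2
    have a1 : 1 < p1 := by rw [hp1]; linarith [hp.1]
    have a2 : p2 < 3 := by rw [hp2]; linarith [hp.2]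
    obtain ⟨C, hC⟩ := wG_bound z 4 p1 p2 a1 a2
    have hpint : Integrable (fun y => wGp z p y) := by
      have := wL_cont
      have := wD_cont
      exact wG_int z p hp.1 hp.2 _ (by fun_prop) _ 4 (fun y => wGp_factor z p y hp.1 hp.2)
    have hder := hasDerivAt_integral_of_dominated_loc_of_deriv_le (μ := volume)
      (F := fun p y => wG z p y * (p * wD y)) (F' := wGp z) (x₀ := p)
      (s := Set.Ioo p1 p2)
      (bound := fun y => (6 * (1 + |1 - z|) + 1) * Real.exp (C - 2 * (wL y).re))
      (Ioo_mem_nhds (by rw [hp1]; linarith [hp.1]) (by rw [hp2]; linarith [hp.2]))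
      (Filter.Eventually.of_forall fun p =>
        ((wG_cont z p).mul (continuous_const.mul wD_cont)).aestronglyMeasurable)
      (wK_int z p hp.1 hp.2) hpint.aestronglyMeasurable
      (Filter.Eventually.of_forall fun y x hx => by
        unfold wGp
        rw [norm_mul]
        have hf := wGp_factor z x y (by linarith [hx.1]) (by linarith [hx.2])
        have hz : 0 ≤ |1 - z| := abs_nonneg _
        calc _ ≤ ‖wG z x y‖ * ((6 * (1 + |1 - z|) + 1) * Real.exp (4 * (wL y).re)) :=
              mul_le_mul_of_nonneg_left hf (norm_nonneg _)
          _ = (6 * (1 + |1 - z|) + 1) * (‖wG z x y‖ * Real.exp (4 * (wL y).re)) := by ring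
          _ ≤ _ := mul_le_mul_of_nonneg_left (hC x hx.1.le hx.2.le y) (by positivity))
      ((dom_integrable C).const_mul _)
      (Filter.Eventually.of_forall fun y x hx => by
        have h1 := wG_hasDeriv_p z x y
        have h2 : HasDerivAt (fun p : ℝ => (p : ℂ) * wD y) (wD y) x := by
          simpa using (Complex.ofRealCLM.hasDerivAt (x := x)).mul_const (wD y)
        refine (h1.mul h2).congr_deriv ?_
        unfold wGp; ring)
    have h0 : ∫ y, wGp z p y = 0 := by
      apply integral_eq_zero_of_hasDerivAt_of_integrable (f := fun y => wG z p y * wL y)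
      · intro y
        refine ((wG_hasDeriv_y z p y).mul (wL_hasDeriv y)).congr_deriv ?_
        unfold wGp; ring
      · exact hpint
      · exact wG_int z p hp.1 hp.2 _ wL_cont 2 1 (fun y => by simpa using wL_norm_le y)
    have := hder.2
    rw [h0] at this
    exact this
  exact isOpen_Ioo.is_const_of_deriv_eq_zero isPreconnected_Ioo
    (fun x hx => (key x hx).differentiableAt.differentiableWithinAt)
    (fun x hx => (key x hx).deriv) hp hq

lemma wK_succ (z p : ℝ) (h1 : 1 < p) (h2 : p < 3) : wK z p = z * wK (z + 1) p := by
  have hGz : ∀ y, wG z p y = wG (z + 1) p y * Complex.exp (p * wL y) := by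
    intro y
    unfold wG
    rw [← Complex.exp_add]
    push_cast; ring_nf
  have e : ∀ y, wG (z + 1) p y * ((Complex.exp (p * wL y) + (1 - (z + 1 : ℝ))) * (p * wD y)) =
      wG z p y * (p * wD y) - z * (wG (z + 1) p y * (p * wD y)) := by
    intro y
    rw [hGz]; push_cast; ring
  have i1 := wK_int z p h1 h2
  have i2 := (wK_int (z + 1) p h1 h2).const_mul (z : ℂ)
  have h0 : ∫ y, wG (z + 1) p y * ((Complex.exp (p * wL y) + (1 - (z + 1 : ℝ))) * (p * wD y)) = 0 := by
    apply integral_eq_zero_of_hasDerivAt_of_integrable (f := wG (z + 1) p)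
    · intro y
      exact wG_hasDeriv_y (z + 1) p y
    · simp_rw [e]; exact i1.sub i2
    · simpa using wG_int (z + 1) p h1 h2 (fun _ => 1) continuous_const 1 0 (fun y => by simp)
  simp_rw [e] at h0
  rw [integral_sub i1 i2, integral_const_mul] at h0
  unfold wK
  exact sub_eq_zero.1 h0

lemma gI (s b : ℝ) (hs : -1 < s) (hb : 0 < b) :
    IntegrableOn (fun t : ℝ => t ^ s * Real.exp (-(b * t))) (Set.Ioi 0) := by
  have := integrableOn_rpow_mul_exp_neg_mul_rpow (p := 1) hs one_pos hb
  simpa using this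

lemma gJ_norm (s t : ℝ) (ht : 0 < t) (u : ℂ) :
    ‖((t ^ s : ℝ) : ℂ) * Complex.exp (-(u * t))‖ = t ^ s * Real.exp (-(u.re * t)) := by
  rw [norm_mul, Complex.norm_real, Real.norm_of_nonneg (Real.rpow_nonneg ht.le s), Complex.norm_exp]
  simp

lemma gJ_meas (s : ℝ) (u : ℂ) : AEStronglyMeasurable
    (fun t : ℝ => ((t ^ s : ℝ) : ℂ) * Complex.exp (-(u * t))) (volume.restrict (Set.Ioi 0)) := by
  apply Measurable.aestronglyMeasurable
  fun_prop

lemma gJ_int (s : ℝ) (hs : -1 < s) (u : ℂ) (hu : 0 < u.re) :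
    IntegrableOn (fun t : ℝ => ((t ^ s : ℝ) : ℂ) * Complex.exp (-(u * t))) (Set.Ioi 0) := by
  refine (gI s u.re hs hu).mono' (gJ_meas s u) ?_
  refine (ae_restrict_iff' measurableSet_Ioi).2 (Filter.Eventually.of_forall fun t ht => ?_)
  exact (gJ_norm s t ht u).le

noncomputable def gJ (s : ℝ) (u : ℂ) : ℂ :=
  ∫ t in Set.Ioi (0 : ℝ), ((t ^ s : ℝ) : ℂ) * Complex.exp (-(u * t))

lemma gJ_parts (γ : ℝ) (hγ : 0 < γ) (u : ℂ) (hu : 0 < u.re) :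
    γ * gJ (γ - 1) u = u * gJ γ u := by
  have i1 := (gJ_int (γ - 1) (by linarith) u hu).const_mul (γ : ℂ)
  have i2 := (gJ_int γ (by linarith) u hu).const_mul u
  have := integral_Ioi_of_hasDerivAt_of_tendsto (a := 0) (m := 0)
    (f := fun t : ℝ => ((t ^ γ : ℝ) : ℂ) * Complex.exp (-(u * t)))
    (f' := fun t : ℝ => γ * (((t ^ (γ - 1) : ℝ) : ℂ) * Complex.exp (-(u * t)))
      - u * (((t ^ γ : ℝ) : ℂ) * Complex.exp (-(u * t)))) ?_ ?_ (i1.sub i2) ?_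
  · rw [integral_sub i1 i2, integral_const_mul, integral_const_mul] at this
    rw [Real.zero_rpow hγ.ne'] at this
    simp only [Complex.ofReal_zero, zero_mul, sub_zero] at this
    exact sub_eq_zero.1 this
  · apply Continuous.continuousWithinAt
    have : Continuous fun t : ℝ => t ^ γ := Real.continuous_rpow_const hγ.le
    fun_prop
  · intro t ht
    have ht' : (0:ℝ) < t := ht
    have h1 : HasDerivAt (fun t : ℝ => ((t ^ γ : ℝ) : ℂ)) ((γ * t ^ (γ - 1) : ℝ) : ℂ) t :=
      (Real.hasDerivAt_rpow_const (Or.inl ht'.ne')).ofReal_comp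
    have h2 : HasDerivAt (fun t : ℝ => -(u * (t : ℂ))) (-u) t := by
      have := ((Complex.ofRealCLM.hasDerivAt (x := t)).const_mul (-u))
      simpa using this
    refine (h1.mul h2.cexp).congr_deriv ?_
    push_cast; ring
  · rw [tendsto_zero_iff_norm_tendsto_zero]
    refine (tendsto_rpow_mul_exp_neg_mul_atTop_nhds_zero γ u.re hu).congr' ?_
    filter_upwards [Filter.eventually_gt_atTop 0] with t ht
    rw [gJ_norm γ t ht u, neg_mul]

lemma gJ_deriv (γ : ℝ) (hγ : 0 < γ) (u : ℂ) (hu : 0 < u.re) :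
    HasDerivAt (gJ (γ - 1)) (-gJ γ u) u := by
  have hopen : {v : ℂ | u.re / 2 < v.re} ∈ nhds u :=
    (isOpen_lt continuous_const Complex.continuous_re).mem_nhds (by
      show u.re / 2 < u.re
      linarith)
  have := hasDerivAt_integral_of_dominated_loc_of_deriv_le
    (μ := volume.restrict (Set.Ioi (0:ℝ))) (x₀ := u)
    (F := fun (u : ℂ) (t : ℝ) => ((t ^ (γ - 1) : ℝ) : ℂ) * Complex.exp (-(u * t)))
    (F' := fun (u : ℂ) (t : ℝ) => -(((t ^ γ : ℝ) : ℂ) * Complex.exp (-(u * t))))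
    (bound := fun t : ℝ => t ^ γ * Real.exp (-(u.re / 2 * t)))
    hopen (Filter.Eventually.of_forall fun v => gJ_meas _ v)
    (gJ_int (γ - 1) (by linarith) u hu) (gJ_meas _ u).neg
    ((ae_restrict_iff' measurableSet_Ioi).2 (Filter.Eventually.of_forall fun t ht v hv => by
      have ht' : (0:ℝ) < t := ht
      have hv' : u.re / 2 < v.re := hv
      rw [norm_neg, gJ_norm γ t ht v]
      have : Real.exp (-(v.re * t)) ≤ Real.exp (-(u.re / 2 * t)) := by
        apply Real.exp_le_exp.2; nlinarith
      exact mul_le_mul_of_nonneg_left this (Real.rpow_nonneg ht'.le _)))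
    (gI γ _ (by linarith) (by linarith))
    ((ae_restrict_iff' measurableSet_Ioi).2 (Filter.Eventually.of_forall fun t ht v hv => by
      have ht' : (0:ℝ) < t := ht
      have h2 : HasDerivAt (fun v : ℂ => -(v * (t : ℂ))) (-t) v := by
        have := (hasDerivAt_id v).mul_const (-t : ℂ)
        simpa using this
      refine (h2.cexp.const_mul _).congr_deriv ?_
      have : t ^ γ = t ^ (γ - 1) * t := by
        rw [← Real.rpow_add_one ht'.ne']; congr 1; ring
      rw [this]
      push_cast; ring))
  have h := this.2
  rw [integral_neg] at h
  exact h

lemma gJ_eq (γ : ℝ) (hγ : 0 < γ) (u : ℂ) (hu : 0 < u.re) :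
    gJ (γ - 1) u = Real.Gamma γ * Complex.exp (-(γ * Complex.log u)) := by
  have key : ∀ v ∈ {v : ℂ | 0 < v.re}, HasDerivAt
      (fun v => Complex.exp (γ * Complex.log v) * gJ (γ - 1) v) 0 v := by
    intro v hv
    have hv' : 0 < v.re := hv
    have hv0 : v ≠ 0 := by rintro rfl; simp at hv'
    have h1 := ((Complex.hasDerivAt_log (Or.inl hv')).const_mul (γ : ℂ)).cexp
    refine (h1.mul (gJ_deriv γ hγ v hv')).congr_deriv ?_
    have := gJ_parts γ hγ v hv'
    have e : gJ γ v = v⁻¹ * (γ * gJ (γ - 1) v) := by rw [this]; field_simp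
    rw [e]; ring
  have hconv : Convex ℝ {v : ℂ | 0 < v.re} := convex_halfSpace_re_gt 0
  have hc := (isOpen_lt continuous_const Complex.continuous_re).is_const_of_deriv_eq_zero
    hconv.isPreconnected
    (fun x hx => (key x hx).differentiableAt.differentiableWithinAt)
    (fun x hx => (key x hx).deriv) (x := u) (y := 1) hu (by simp)
  have h1 : gJ (γ - 1) 1 = Real.Gamma γ := by
    rw [Real.Gamma_eq_integral hγ, ← integral_complex_ofReal]
    unfold gJ
    congr 1
    ext t
    push_cast
    rw [one_mul, mul_comm]
  simp only [Complex.log_one, mul_zero, Complex.exp_zero, one_mul] at hc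
  rw [h1] at hc
  rw [← hc, Complex.exp_neg]
  field_simp [Complex.exp_ne_zero]

lemma gauss_line (u : ℝ) : ∫ y : ℝ, Complex.exp ((1 + y * Complex.I) ^ 2 - u * (1 + y * Complex.I)) =
    ((Real.sqrt Real.pi * Real.exp (-(1 / 4) * u ^ (2:ℝ)) : ℝ) : ℂ) := by
  have h := integral_cexp_quadratic (b := -1) (by simp) ((2 - u) * Complex.I) (1 - u)
  have e : ∀ y : ℝ, Complex.exp ((1 + y * Complex.I) ^ 2 - u * (1 + y * Complex.I)) =
      Complex.exp (-1 * (y:ℂ) ^ 2 + (2 - u) * Complex.I * y + (1 - u)) := by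
    intro y
    congr 1
    linear_combination (y:ℂ) ^ 2 * Complex.I_sq
  simp_rw [e]
  rw [h]
  push_cast
  have e1 : ((Real.pi : ℂ) / - -1) ^ (1 / 2 : ℂ) = (Real.sqrt Real.pi : ℂ) := by
    rw [Real.sqrt_eq_rpow, Complex.ofReal_cpow Real.pi_pos.le]
    simp
  rw [e1]
  congr 2
  rw [Real.rpow_two]
  push_cast
  linear_combination ((2 - u) ^ 2 / 4 : ℂ) * Complex.I_sq

lemma wK_two (z : ℝ) (hz : 1 / 2 < z) : wK z 2 = 2 * Real.pi * Complex.I / Real.Gamma z := by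
  set a : ℝ := 2 * z - 1 with ha
  have ha0 : 0 < a := by linarith
  have hΓa := Real.Gamma_pos_of_pos ha0
  have hΓz := Real.Gamma_pos_of_pos (by linarith : 0 < z)
  -- the integrand
  have e1 : ∀ y : ℝ, Real.Gamma a * (wG z 2 y * ((2:ℝ) * wD y)) = 2 * Complex.I *
      ∫ t in Set.Ioi (0:ℝ), ((t ^ (a - 1) : ℝ) : ℂ) *
        Complex.exp ((1 + y * Complex.I) ^ 2 - t * (1 + y * Complex.I)) := by
    intro y
    have h1 := gJ_eq a ha0 (1 + y * Complex.I) (by simp)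
    have h2 : ∫ t in Set.Ioi (0:ℝ), ((t ^ (a - 1) : ℝ) : ℂ) *
        Complex.exp ((1 + y * Complex.I) ^ 2 - t * (1 + y * Complex.I)) =
        Complex.exp ((1 + y * Complex.I) ^ 2) * gJ (a - 1) (1 + y * Complex.I) := by
      unfold gJ
      rw [← integral_const_mul]
      congr 1
      ext t
      rw [mul_left_comm, ← Complex.exp_add]
      ring_nf
    rw [h2, h1]
    change _ = 2 * Complex.I * (_ * (_ * Complex.exp (-(a * wL y))))
    have h3 : wD y = Complex.I * Complex.exp (-wL y) := by
      rw [Complex.exp_neg, wL_exp]; rfl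
    have h4 : wG z 2 y = Complex.exp ((1 + y * Complex.I) ^ 2) * Complex.exp ((1 - z) * (2 * wL y)) := by
      unfold wG
      rw [Complex.exp_add, ← wL_exp, ← Complex.exp_nat_mul]
      push_cast; rfl
    have h5 : Complex.exp (-(a * wL y)) = Complex.exp ((1 - z) * (2 * wL y)) * Complex.exp (-wL y) := by
      rw [← Complex.exp_add, ha]; congr 1; push_cast; ring
    rw [h3, h4, h5]; push_cast; ring
  have hint : Integrable (Function.uncurry fun (y t : ℝ) => ((t ^ (a - 1) : ℝ) : ℂ) *
        Complex.exp ((1 + y * Complex.I) ^ 2 - t * (1 + y * Complex.I)))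
        (volume.prod (volume.restrict (Set.Ioi (0:ℝ)))) := by
    have hb := (integrable_exp_neg_mul_sq (b := 1) one_pos).const_mul (Real.exp 1) |>.mul_prod
      (gI (a - 1) 1 (by linarith) one_pos)
    refine hb.mono' ?_ ?_
    · apply Measurable.aestronglyMeasurable
      unfold Function.uncurry
      fun_prop
    · have : ∀ᵐ q : ℝ × ℝ ∂(volume.prod (volume.restrict (Set.Ioi (0:ℝ)))), q.2 ∈ Set.Ioi (0:ℝ) :=
        Measure.quasiMeasurePreserving_snd.ae (ae_restrict_mem measurableSet_Ioi)
      filter_upwards [this] with q hq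
      have hq' : 0 < q.2 := hq
      simp only [Function.uncurry]
      rw [norm_mul, Complex.norm_real, Real.norm_of_nonneg (Real.rpow_nonneg hq'.le _),
        Complex.norm_exp]
      have : ((1 + (q.1:ℂ) * Complex.I) ^ 2 - q.2 * (1 + q.1 * Complex.I)).re =
          1 + -1 * q.1 ^ 2 + -(1 * q.2) := by
        simp [pow_two]
        try ring
      rw [this, Real.exp_add, Real.exp_add]
      apply le_of_eq; ring
  have e2 : Real.Gamma a * wK z 2 = 2 * Complex.I *
      ((∫ t in Set.Ioi (0:ℝ), t ^ (a - 1) * (Real.sqrt Real.pi * Real.exp (-(1/4) * t ^ (2:ℝ))) : ℝ) : ℂ) := by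
    unfold wK
    rw [← integral_const_mul]
    simp_rw [e1]
    rw [integral_const_mul, integral_integral_swap hint, ← integral_complex_ofReal]
    congr 2
    ext t
    rw [integral_const_mul, gauss_line]
    push_cast; rfl
  have e3 : (∫ t in Set.Ioi (0:ℝ), t ^ (a - 1) * (Real.sqrt Real.pi * Real.exp (-(1/4) * t ^ (2:ℝ)))) =
      Real.pi * Real.Gamma a / Real.Gamma z := by
    have h := integral_rpow_mul_exp_neg_mul_rpow (p := 2) (q := a - 1) (b := 1 / 4) (by norm_num)
      (by linarith) (by norm_num)
    have : ∀ t : ℝ, t ^ (a - 1) * (Real.sqrt Real.pi * Real.exp (-(1/4) * t ^ (2:ℝ))) =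
      Real.sqrt Real.pi * (t ^ (a - 1) * Real.exp (-(1/4) * t ^ (2:ℝ))) := fun t => by ring
    simp_rw [this]
    rw [integral_const_mul, h]
    have hd := Real.Gamma_mul_Gamma_add_half (z - 1 / 2)
    have x1 : z - 1 / 2 + 1 / 2 = z := by ring
    have x2 : 2 * (z - 1 / 2) = a := by rw [ha]; ring
    have x3 : (a - 1 + 1) / 2 = z - 1 / 2 := by rw [ha]; ring
    rw [x1, x2] at hd
    rw [x3]
    have x4 : (1 / 4 : ℝ) ^ (-(a - 1 + 1) / 2) = 2 ^ a := by
      rw [show (1 / 4 : ℝ) = 2 ^ (-2 : ℝ) by norm_num, ← Real.rpow_mul (by norm_num)]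
      congr 1; ring
    have x5 : (2:ℝ) ^ (1 - a) = 2 / 2 ^ a := by
      rw [Real.rpow_sub (by norm_num), Real.rpow_one]
    have x6 : 0 < (2:ℝ) ^ a := by positivity
    have x7 : Real.sqrt Real.pi * Real.sqrt Real.pi = Real.pi := Real.mul_self_sqrt Real.pi_pos.le
    rw [x4, eq_div_iff hΓz.ne']
    rw [x5] at hd
    calc _ = Real.sqrt Real.pi * (2 ^ a * (1 / 2)) * (Real.Gamma (z - 1 / 2) * Real.Gamma z) := by ring
      _ = Real.Gamma a * (Real.sqrt Real.pi * Real.sqrt Real.pi) := by rw [hd]; field_simp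
      _ = _ := by rw [x7]; ring
  rw [e3] at e2
  have hne : (Real.Gamma a : ℂ) ≠ 0 := by exact_mod_cast hΓa.ne'
  apply mul_left_cancel₀ hne
  rw [e2]; push_cast; ring

lemma wK_eq (z p : ℝ) (h1 : 1 < p) (h2 : p < 3) :
    wK z p = 2 * Real.pi * Complex.I / Real.Gamma z := by
  have step : ∀ n : ℕ, ∀ z : ℝ, 1 / 2 < z + n → wK z p = 2 * Real.pi * Complex.I / Real.Gamma z := by
    intro n
    induction n with
    | zero =>
      intro z hz
      rw [wK_const z p 2 ⟨h1, h2⟩ ⟨by norm_num, by norm_num⟩, wK_two z (by simpa using hz)]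
    | succ n ih =>
      intro z hz
      rw [wK_succ z p h1 h2, ih (z + 1) (by push_cast at hz; linarith)]
      by_cases h0 : z = 0
      · simp [h0]
      · rw [Real.Gamma_add_one h0]
        have : (z : ℂ) ≠ 0 := by exact_mod_cast h0
        push_cast
        rw [mul_div_assoc', mul_div_mul_left _ _ this]
  obtain ⟨n, hn⟩ := exists_nat_gt (1 / 2 - z)
  exact step n z (by linarith)

lemma wright_rep (α β x p : ℝ) (hα0 : 0 < α) (hα1 : α < 1) (h1 : 1 < p) (h2 : p < 3) :
    (wright (-α) β (-x) : ℂ) = (2 * Real.pi * Complex.I)⁻¹ *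
      ∫ y, wG β p y * (p * wD y) * Complex.exp (-(x * Complex.exp (α * p * wL y))) := by
  have hpi : (2 * Real.pi * Complex.I : ℂ) ≠ 0 := by simp [Real.pi_ne_zero]
  set v : ℝ → ℂ := fun y => Complex.exp (α * p * wL y) with hv
  have hvn : ∀ y, ‖v y‖ = Real.exp (α * p * (wL y).re) := by
    intro y
    have := norm_exp_mul (α * p) y
    push_cast at this
    exact this
  have hG : ∀ (n : ℕ) y, wG (β + -α * n) p y = wG β p y * v y ^ n := by
    intro n y
    rw [hv]
    unfold wG
    simp only
    rw [← Complex.exp_nat_mul, ← Complex.exp_add]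
    congr 1
    push_cast; ring
  have hvc : Continuous v := by
    have := wL_cont
    fun_prop
  have hs := hasSum_integral_of_dominated_convergence (μ := (volume : Measure ℝ))
    (F := fun (n : ℕ) y => wG β p y * (p * wD y) * ((-(x * v y)) ^ n / (n.factorial : ℂ)))
    (f := fun y => wG β p y * (p * wD y) * Complex.exp (-(x * v y)))
    (fun n y => ‖wG β p y * (p * wD y)‖ * ((|x| * ‖v y‖) ^ n / (n.factorial : ℝ))) ?_ ?_ ?_ ?_ ?_
  · have hterm : ∀ n : ℕ, (((-x) ^ n / ((n.factorial : ℝ) * Real.Gamma (β + -α * n)) : ℝ) : ℂ) =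
        (2 * Real.pi * Complex.I)⁻¹ * ∫ y, wG β p y * (p * wD y) * ((-(x * v y)) ^ n / (n.factorial : ℂ)) := by
      intro n
      have hk := wK_eq (β + -α * n) p h1 h2
      have : ∀ y, wG β p y * (p * wD y) * ((-(x * v y)) ^ n / (n.factorial : ℂ)) =
          ((-x) ^ n / (n.factorial : ℂ)) * (wG (β + -α * n) p y * (p * wD y)) := by
        intro y
        rw [hG, ← neg_mul, mul_pow]; ring
      simp_rw [this]
      rw [integral_const_mul]
      change _ = _ * (_ * wK (β + -α * n) p)
      rw [hk, mul_left_comm, mul_div_assoc', inv_mul_cancel₀ hpi]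
      push_cast
      rw [div_mul_div_comm, mul_one]
    have := hs.mul_left ((2 * Real.pi * Complex.I : ℂ)⁻¹)
    simp_rw [← hterm] at this
    unfold wright
    rw [Complex.ofReal_tsum]
    exact this.tsum_eq
  · intro n
    have h := wG_cont β p
    have h' := wD_cont
    apply Continuous.aestronglyMeasurable
    fun_prop
  · intro n
    refine Filter.Eventually.of_forall fun y => le_of_eq ?_
    simp
  · refine Filter.Eventually.of_forall fun y => ?_
    exact (Real.summable_pow_div_factorial _).mul_left _
  · have hsum : ∀ y, ∑' n : ℕ, ‖wG β p y * (p * wD y)‖ * ((|x| * ‖v y‖) ^ n / (n.factorial : ℝ)) =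
        ‖wG β p y * (p * wD y)‖ * Real.exp (|x| * ‖v y‖) := by
      intro y
      rw [tsum_mul_left, Real.exp_eq_exp_ℝ, NormedSpace.exp_eq_tsum_div]
    simp_rw [hsum]
    obtain ⟨C, hC⟩ := master p p ((1 - β) * p) |x| (α * p) h1 h2 (by nlinarith) (by nlinarith)
    refine ((dom_integrable C).const_mul p).mono' ?_ ?_
    · have h := wG_cont β p
      have h' := wD_cont
      apply Continuous.aestronglyMeasurable
      fun_prop
    · refine Filter.Eventually.of_forall fun y => ?_
      rw [norm_mul, norm_norm, Real.norm_of_nonneg (Real.exp_pos _).le, norm_mul, hvn, wG_norm]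
      have hpD := pD_norm p y
      rw [zero_mul, Real.exp_zero, mul_one, abs_of_pos (by linarith)] at hpD
      have := Real.exp_le_exp.2 (hC p le_rfl le_rfl y)
      rw [Real.exp_add] at this
      calc _ ≤ Real.exp ((Complex.exp (p * wL y)).re + (1 - β) * p * (wL y).re) * p *
            Real.exp (|x| * Real.exp (α * p * (wL y).re)) := by gcongr
        _ = p * (Real.exp ((Complex.exp (p * wL y)).re + (1 - β) * p * (wL y).re) *
            Real.exp (|x| * Real.exp (α * p * (wL y).re))) := by ring
        _ ≤ _ := mul_le_mul_of_nonneg_left this (by linarith)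
  · refine Filter.Eventually.of_forall fun y => ?_
    apply HasSum.mul_left
    rw [Complex.exp_eq_exp_ℂ]
    exact NormedSpace.expSeries_div_hasSum_exp _

theorem shifted (α γ β x : ℝ) (hα : α ∈ Set.Ioo (0 : ℝ) 1)
    (hγ : 0 < γ) (hx : 0 ≤ x) :
    IntegrableOn (fun t => wright (-α) (β - α * γ) (-(t + x)) * t ^ (γ - 1))
      (Set.Ioi 0) ∧
    wright (-α) β (-x) =
      (1 / Real.Gamma γ) *
        ∫ t in Set.Ioi 0, wright (-α) (β - α * γ) (-(t + x)) * t ^ (γ - 1) := by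
  obtain ⟨hα0, hα1⟩ := hα
  obtain ⟨p, h1, hp⟩ := exists_between (lt_min ((one_lt_div hα0).2 hα1) (by norm_num : (1:ℝ) < 2))
  have hαp : α * p < 1 := by
    have := hp.trans_le (min_le_left _ _)
    rw [lt_div_iff₀ hα0] at this; linarith
  have hαp0 : 0 < α * p := by nlinarith
  have h2 : p < 3 := by
    have := hp.trans_le (min_le_right _ _)
    linarith
  set δ := β - α * γ with hδ
  have hpi : (2 * Real.pi * Complex.I : ℂ) ≠ 0 := by simp [Real.pi_ne_zero]
  set v : ℝ → ℂ := fun y => Complex.exp (α * p * wL y) with hv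
  have hvc : Continuous v := by
    have := wL_cont
    fun_prop
  have hpos := Real.pi_pos
  set κ : ℝ := Real.cos (α * p * (Real.pi / 2)) with hκ
  have hκ0 : 0 < κ := Real.cos_pos_of_mem_Ioo ⟨by nlinarith, by nlinarith⟩
  have hvre : ∀ y, κ ≤ (v y).re := by
    intro y
    have h := re_exp_mul (α * p) y
    push_cast at h
    have h' : (v y).re = _ := h
    rw [h']
    have hc : κ ≤ Real.cos (α * p * (wL y).im) := by
      rw [← Real.cos_abs (α * p * (wL y).im), abs_mul, abs_of_pos hαp0]
      apply Real.cos_le_cos_of_nonneg_of_le_pi (by positivity) (by nlinarith)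
      exact mul_le_mul_of_nonneg_left (wL_im_lt y).le hαp0.le
    have hE : 1 ≤ Real.exp (α * p * (wL y).re) :=
      Real.one_le_exp (mul_nonneg hαp0.le (wL_re_nonneg y))
    nlinarith
  have hvlog : ∀ y, Complex.log (v y) = α * p * wL y := by
    intro y
    have him : ((α * p * wL y : ℂ)).im = α * p * (wL y).im := by
      rw [← Complex.ofReal_mul, Complex.im_ofReal_mul]
    have hlt : |α * p * (wL y).im| < Real.pi := by
      rw [abs_mul, abs_of_pos hαp0]
      have := wL_im_lt y
      nlinarith [abs_nonneg (wL y).im]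
    rw [abs_lt] at hlt
    apply Complex.log_exp
    · rw [him]; exact hlt.1
    · rw [him]; exact hlt.2.le
  set g : ℝ → ℝ → ℂ := fun y t => wG δ p y * (p * wD y) *
    Complex.exp (-(((t + x : ℝ) : ℂ) * v y)) * ((t ^ (γ - 1) : ℝ) : ℂ) with hg
  have hint : Integrable (Function.uncurry g) (volume.prod (volume.restrict (Set.Ioi (0:ℝ)))) := by
    have hb := (wK_int δ p h1 h2).norm.mul_prod (gI (γ - 1) κ (by linarith) hκ0)
    refine hb.mono' ?_ ?_
    · apply Measurable.aestronglyMeasurable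
      have m1 := (wG_cont δ p).measurable
      have m2 := wD_cont.measurable
      have m3 := hvc.measurable
      unfold Function.uncurry
      simp only [hg]
      fun_prop
    · have : ∀ᵐ q : ℝ × ℝ ∂(volume.prod (volume.restrict (Set.Ioi (0:ℝ)))), q.2 ∈ Set.Ioi (0:ℝ) :=
        Measure.quasiMeasurePreserving_snd.ae (ae_restrict_mem measurableSet_Ioi)
      filter_upwards [this] with q hq
      have hq' : 0 < q.2 := hq
      simp only [Function.uncurry, hg]
      rw [norm_mul, norm_mul, Complex.norm_real, Real.norm_of_nonneg (Real.rpow_nonneg hq'.le _),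
        Complex.norm_exp, Complex.neg_re, Complex.re_ofReal_mul]
      have : Real.exp (-((q.2 + x) * (v q.1).re)) ≤ Real.exp (-(κ * q.2)) := by
        apply Real.exp_le_exp.2
        have := hvre q.1
        nlinarith
      have h3 : 0 ≤ q.2 ^ (γ - 1) := Real.rpow_nonneg hq'.le _
      calc _ ≤ ‖wG δ p q.1 * (p * wD q.1)‖ * Real.exp (-(κ * q.2)) * q.2 ^ (γ - 1) := by gcongr
        _ = _ := by ring
  have hrep : ∀ t : ℝ, ((wright (-α) δ (-(t + x)) * t ^ (γ - 1) : ℝ) : ℂ) =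
      (2 * Real.pi * Complex.I)⁻¹ * ∫ y, g y t := by
    intro t
    rw [Complex.ofReal_mul, wright_rep α δ (t + x) p hα0 hα1 h1 h2, mul_assoc]
    simp only [hg]
    rw [integral_mul_const]
  have hintC : IntegrableOn (fun t : ℝ => ((wright (-α) δ (-(t + x)) * t ^ (γ - 1) : ℝ) : ℂ))
      (Set.Ioi 0) := by
    simp_rw [hrep]
    exact hint.integral_prod_right.const_mul _
  refine ⟨?_, ?_⟩
  · have := hintC.re
    show Integrable _ _
    simpa using this
  · have hΓ := Real.Gamma_pos_of_pos hγ
    have hΓ' : (Real.Gamma γ : ℂ) ≠ 0 := by exact_mod_cast hΓ.ne'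
    have hmain : ((∫ t in Set.Ioi (0:ℝ), wright (-α) δ (-(t + x)) * t ^ (γ - 1) : ℝ) : ℂ) =
        Real.Gamma γ * (wright (-α) β (-x) : ℂ) := by
      rw [← integral_complex_ofReal]
      simp_rw [hrep]
      rw [integral_const_mul, ← integral_integral_swap hint, wright_rep α β x p hα0 hα1 h1 h2,
        mul_left_comm, ← integral_const_mul (Real.Gamma γ : ℂ)]
      congr 1
      refine integral_congr_ae (Filter.Eventually.of_forall fun y => ?_)
      beta_reduce
      have hJ := gJ_eq γ hγ (v y) (hκ0.trans_le (hvre y))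
      have e1 : ∀ t : ℝ, g y t = (wG δ p y * (p * wD y) * Complex.exp (-(x * v y))) *
          (((t ^ (γ - 1) : ℝ) : ℂ) * Complex.exp (-(v y * t))) := by
        intro t
        simp only [hg]
        have : Complex.exp (-(((t + x : ℝ) : ℂ) * v y)) =
            Complex.exp (-(x * v y)) * Complex.exp (-(v y * t)) := by
          rw [← Complex.exp_add]; congr 1; push_cast; ring
        rw [this]; ring
      simp_rw [e1]
      rw [integral_const_mul]
      change _ * gJ (γ - 1) (v y) = _
      rw [hJ, hvlog]
      have e2 : wG β p y = wG δ p y * Complex.exp (-(γ * (α * p * wL y))) := by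
        unfold wG
        rw [← Complex.exp_add, hδ]; congr 1; push_cast; ring
      rw [e2]; ring
    have hmain' : (∫ t in Set.Ioi (0:ℝ), wright (-α) δ (-(t + x)) * t ^ (γ - 1)) =
        Real.Gamma γ * wright (-α) β (-x) := by exact_mod_cast hmain
    rw [hmain']
    field_simp

/-- Fractional integration identity:
`φ(-α, β, -x) = (1/Γ(γ)) ∫_x^∞ φ(-α, β - αγ, -t) (t-x)^{γ-1} dt` for `α ∈ (0,1)`,
`γ > 0`, `β ∈ ℝ` and `x ≥ 0`, with the integral absolutely convergent. -/
theorem wright_fractional_integral (α γ β x : ℝ) (hα : α ∈ Set.Ioo (0 : ℝ) 1)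
    (hγ : 0 < γ) (hx : 0 ≤ x) :
    IntegrableOn (fun t => wright (-α) (β - α * γ) (-t) * (t - x) ^ (γ - 1))
      (Set.Ioi x) ∧
    wright (-α) β (-x) =
      (1 / Real.Gamma γ) *
        ∫ t in Set.Ioi x, wright (-α) (β - α * γ) (-t) * (t - x) ^ (γ - 1) := by
  have hs := shifted α γ β x hα hγ hx
  have mp := measurePreserving_add_right (volume : Measure ℝ) x
  have me : MeasurableEmbedding (fun t : ℝ => t + x) := measurableEmbedding_addRight x
  have hpre : (fun t : ℝ => t + x) ⁻¹' Set.Ioi x = Set.Ioi 0 := by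
    ext t; simp
  constructor
  · rw [← mp.integrableOn_comp_preimage me, hpre]
    simpa [Function.comp_def] using hs.1
  · rw [← mp.setIntegral_preimage_emb me, hpre]
    simpa using hs.2
end

section
/- For every α ∈ (0,1), β ≥ 0 and s > -1, one has the Mellin transform identity ∫_0^∞ x^s · φ(-α, β, -x) dx = Γ(1+s) / Γ(α + β + αs), the integral being absolutely convergent. -/
open MeasureTheory

open Complex in
lemma wm_slit {θ : ℝ} (hs : 0 < Real.sin θ) {ε : ℝ} (r : ℝ) (h : 0 < ε ∨ (0 ≤ ε ∧ 0 < r)) :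
    ((ε : ℂ) + r * exp (θ * I)) ∈ slitPlane := by
  rw [mem_slitPlane_iff]
  have him : ((ε : ℂ) + r * exp (θ * I)).im = r * Real.sin θ := by
    simp [exp_ofReal_mul_I_im]
  rcases eq_or_ne r 0 with h0 | h0
  · left; subst h0
    rcases h with h | h
    · simpa using h
    · exact absurd h.2 (lt_irrefl _)
  · right; rw [him]; exact mul_ne_zero h0 hs.ne'

/-- master integrability -/
lemma wm_int {c α x p : ℝ} (hc : 0 < c) (hα : α < 1) {v : ℝ → ℝ}
    (hv : Continuous v) (hpos : ∀ r, 0 < v r) (hlow : ∀ r, r - 1 ≤ v r) (hup : ∀ r, 0 ≤ r → v r ≤ r + 1) :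
    IntegrableOn (fun r => Real.exp (-c * r) * v r ^ p * Real.exp (x * v r ^ α)) (Set.Ioi 0) := by
  apply integrable_of_isBigO_exp_neg (b := c / 2) (by positivity)
  · apply Continuous.continuousOn
    have h1 : ∀ q : ℝ, Continuous fun r => v r ^ q :=
      fun q => hv.rpow_const (fun r => Or.inl (hpos r).ne')
    have := h1 p
    have := h1 α
    fun_prop
  · have hvt : Filter.Tendsto v Filter.atTop Filter.atTop :=
      Filter.tendsto_atTop_mono hlow (Filter.tendsto_atTop_add_const_right _ (-1) Filter.tendsto_id)
    have h1 : ∀ᶠ w : ℝ in Filter.atTop, w ^ p * Real.exp (-(c/4) * w) ≤ 1 :=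
      (tendsto_rpow_mul_exp_neg_mul_atTop_nhds_zero p (c/4) (by positivity)).eventually_le_const (by norm_num)
    have h2 : ∀ᶠ w : ℝ in Filter.atTop, |x| * w ^ α ≤ c / 4 * w := by
      have h3 : Filter.Tendsto (fun w : ℝ => |x| * w ^ (-(1 - α))) Filter.atTop (nhds (|x| * 0)) :=
        (tendsto_rpow_neg_atTop (by linarith)).const_mul _
      rw [mul_zero] at h3
      filter_upwards [h3.eventually_le_const (show 0 < c / 4 by positivity), Filter.eventually_gt_atTop 0] with w hw hw0
      calc |x| * w ^ α = (|x| * w ^ (-(1 - α))) * w := by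
            rw [mul_assoc, ← Real.rpow_add_one hw0.ne']; congr 2; ring
        _ ≤ _ := by gcongr
    apply Asymptotics.IsBigO.of_bound (Real.exp (c/2))
    filter_upwards [hvt.eventually h1, hvt.eventually h2, Filter.eventually_ge_atTop 0] with r h1 h2 hr
    have hp := hpos r
    rw [Real.norm_of_nonneg (by positivity), Real.norm_of_nonneg (by positivity)]
    have h3 : x * v r ^ α ≤ c / 4 * v r :=
      le_trans (by gcongr; exact le_abs_self x) h2
    have h4 : v r ^ p ≤ Real.exp (c/4 * v r) := by
      rw [neg_mul, Real.exp_neg, ← div_eq_mul_inv, div_le_one (Real.exp_pos _)] at h1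
      exact h1
    calc Real.exp (-c * r) * v r ^ p * Real.exp (x * v r ^ α)
        ≤ Real.exp (-c * r) * Real.exp (c/4 * v r) * Real.exp (c / 4 * v r) := by gcongr
      _ = Real.exp (-c * r + c/2 * v r) := by rw [← Real.exp_add, ← Real.exp_add]; ring_nf
      _ ≤ Real.exp (c / 2 + (-(c/2) * r)) := by
          apply Real.exp_le_exp.2
          nlinarith [hup r hr]
      _ = _ := by rw [Real.exp_add]

noncomputable def wmu (θ r : ℝ) : ℂ := 1 + r * Complex.exp (θ * Complex.I)

section
variable {θ : ℝ}
open Complex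

lemma wmu_slit (hs : 0 < Real.sin θ) (r : ℝ) : wmu θ r ∈ slitPlane := by
  have := wm_slit hs (ε := 1) r (Or.inl one_pos)
  simpa [wmu] using this

lemma wmu_re (r : ℝ) : (wmu θ r).re = 1 + r * Real.cos θ := by
  simp [wmu, exp_ofReal_mul_I_re]
lemma wmu_im (r : ℝ) : (wmu θ r).im = r * Real.sin θ := by
  simp [wmu, exp_ofReal_mul_I_im]

lemma wmu_cont : Continuous (wmu θ) := by unfold wmu; fun_prop

lemma wmu_pos (hs : 0 < Real.sin θ) (r : ℝ) : 0 < ‖wmu θ r‖ :=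
  norm_pos_iff.2 (slitPlane_ne_zero (wmu_slit hs r))

lemma wm_norm_low (r : ℝ) : r - 1 ≤ ‖wmu θ r‖ := by
  have h : ‖(r : ℂ) * exp (θ * I)‖ ≤ ‖wmu θ r‖ + ‖(1:ℂ)‖ := by
    have := norm_sub_le (wmu θ r) 1
    simpa [wmu] using this
  rw [norm_mul, norm_exp_ofReal_mul_I] at h
  simp at h
  linarith [le_abs_self r]

lemma wm_norm_up' (ε r : ℝ) (hr : 0 ≤ r) (hε : 0 ≤ ε) : ‖(ε : ℂ) + r * exp (θ * I)‖ ≤ ε + r := by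
  refine (norm_add_le _ _).trans ?_
  rw [norm_mul, norm_exp_ofReal_mul_I]
  simp [abs_of_nonneg hr, abs_of_nonneg hε]

lemma wm_norm_up (r : ℝ) (hr : 0 ≤ r) : ‖wmu θ r‖ ≤ r + 1 := by
  have := wm_norm_up' (θ := θ) 1 r hr zero_le_one
  simpa [wmu, add_comm] using this

/-- arg bounds -/
lemma wm_sin (r : ℝ) : ‖wmu θ r‖ * Real.sin (θ - arg (wmu θ r)) = Real.sin θ := by
  rw [Real.sin_sub, mul_sub, mul_left_comm, norm_mul_cos_arg, mul_left_comm, norm_mul_sin_arg,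
    wmu_re, wmu_im]
  ring

lemma wm_arg (h0 : 0 < θ) (h1 : θ < Real.pi) {r : ℝ} (hr : 0 ≤ r) :
    0 ≤ arg (wmu θ r) ∧ arg (wmu θ r) ≤ θ ∧ Real.sin θ ≤ ‖wmu θ r‖ := by
  have hs := Real.sin_pos_of_pos_of_lt_pi h0 h1
  have ha : 0 ≤ arg (wmu θ r) := arg_nonneg_iff.2 (by rw [wmu_im]; positivity)
  have hsin := wm_sin (θ := θ) r
  have hp := wmu_pos hs r
  refine ⟨ha, ?_, ?_⟩
  · by_contra h
    have := Real.sin_neg_of_neg_of_neg_pi_lt (x := θ - arg (wmu θ r)) (by linarith) (by linarith [arg_le_pi (wmu θ r)])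
    nlinarith
  · rw [← hsin]
    nlinarith [Real.sin_le_one (θ - arg (wmu θ r))]

/-- integrand -/
noncomputable def wmF (θ z r : ℝ) : ℂ :=
  exp (wmu θ r) * wmu θ r ^ (-z : ℂ) * exp (θ * I)

noncomputable def wmJ (θ z : ℝ) : ℂ := ∫ r in Set.Ioi (0:ℝ), wmF θ z r

lemma wmF_cont (hs : 0 < Real.sin θ) (z : ℝ) : Continuous (wmF θ z) := by
  have h : Continuous fun r => wmu θ r ^ (-z : ℂ) :=
    wmu_cont.cpow continuous_const (fun r => wmu_slit hs r)
  have := wmu_cont (θ := θ)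
  unfold wmF
  fun_prop

lemma wmF_norm (z r : ℝ) : ‖wmF θ z r‖ = Real.exp 1 * (Real.exp (- (-Real.cos θ) * r) * ‖wmu θ r‖ ^ (-z)) := by
  unfold wmF
  rw [norm_mul, norm_mul, norm_exp_ofReal_mul_I, norm_exp, wmu_re, ← ofReal_neg, norm_cpow_real, Real.exp_add]
  ring_nf

lemma wm_int1 (hs : 0 < Real.sin θ) (hc : Real.cos θ < 0) (p x α : ℝ) (hα : α < 1) :
    IntegrableOn (fun r => Real.exp (- (-Real.cos θ) * r) * ‖wmu θ r‖ ^ p * Real.exp (x * ‖wmu θ r‖ ^ α)) (Set.Ioi 0) :=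
  wm_int (by linarith) hα wmu_cont.norm (wmu_pos hs) wm_norm_low wm_norm_up

lemma wmF_int (hs : 0 < Real.sin θ) (hc : Real.cos θ < 0) (z : ℝ) :
    IntegrableOn (wmF θ z) (Set.Ioi 0) := by
  have := (wm_int1 hs hc (-z) 0 0 one_pos).const_mul (Real.exp 1)
  refine Integrable.mono' this (wmF_cont hs z).aestronglyMeasurable ?_
  refine Filter.Eventually.of_forall fun r => ?_
  rw [wmF_norm]
  simp

end
section
open Complex
lemma wm_cgam {a : ℝ} (ha : 0 < a) {c : ℂ} (hc : 0 < c.re) :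
    ∫ t in Set.Ioi (0:ℝ), ((t ^ (a - 1) : ℝ) : ℂ) * exp (-(c * t)) = c ^ (-a : ℂ) * (Real.Gamma a : ℂ) := by
  set G : ℂ → ℂ := fun c => ∫ t in Set.Ioi (0:ℝ), ((t ^ (a - 1) : ℝ) : ℂ) * exp (-(c * t)) with hG
  have hbint : ∀ δ : ℝ, 0 < δ → ∀ q : ℝ, -1 < q → IntegrableOn (fun t : ℝ => t ^ q * Real.exp (-δ * t)) (Set.Ioi 0) := by
    intro δ hδ q hq
    have := integrableOn_rpow_mul_exp_neg_mul_rpow (p := 1) hq one_pos hδ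
    simpa using this
  have hmeas : ∀ q : ℝ, ∀ c : ℂ, AEStronglyMeasurable (fun t : ℝ => ((t ^ q : ℝ) : ℂ) * exp (-(c * t))) (volume.restrict (Set.Ioi 0)) := by
    intro q c
    apply Measurable.aestronglyMeasurable
    fun_prop
  have hnorm : ∀ q : ℝ, ∀ c : ℂ, ∀ t : ℝ, 0 < t → ‖((t ^ q : ℝ) : ℂ) * exp (-(c * t))‖ = t ^ q * Real.exp (-c.re * t) := by
    intro q c t ht
    rw [norm_mul, norm_exp, norm_real, Real.norm_of_nonneg (by positivity)]
    simp
  have hdiff : DifferentiableOn ℂ G {c | 0 < c.re} := by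
    intro c₀ hc₀
    apply DifferentiableAt.differentiableWithinAt
    have hc₀ : 0 < c₀.re := hc₀
    have key := hasDerivAt_integral_of_dominated_loc_of_deriv_le
      (μ := volume.restrict (Set.Ioi (0:ℝ))) (𝕜 := ℂ)
      (F := fun (c : ℂ) (t : ℝ) => ((t ^ (a - 1) : ℝ) : ℂ) * exp (-(c * t)))
      (F' := fun (c : ℂ) (t : ℝ) => ((t ^ (a - 1) : ℝ) : ℂ) * (exp (-(c * t)) * (-(1 * t)))) (x₀ := c₀)
      (s := Metric.ball c₀ (c₀.re / 2)) (bound := fun t => t ^ a * Real.exp (-(c₀.re/2) * t))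
      (Metric.ball_mem_nhds _ (by positivity)) (Filter.Eventually.of_forall fun c => hmeas _ c) ?_ ?_ ?_ ?_ ?_
    · exact key.2.differentiableAt
    · refine Integrable.mono' (hbint c₀.re hc₀ (a - 1) (by linarith)) (hmeas _ _) ?_
      filter_upwards [ae_restrict_mem measurableSet_Ioi] with t ht
      rw [hnorm _ _ _ ht]
    · apply Measurable.aestronglyMeasurable
      fun_prop
    · filter_upwards [ae_restrict_mem measurableSet_Ioi] with t ht c hc
      have ht : 0 < t := ht
      rw [← mul_assoc, norm_mul, hnorm _ _ _ ht]
      have h1 : ‖(-(1 * (t:ℂ)))‖ = t := by simp [abs_of_pos ht]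
      have h2 : c₀.re / 2 ≤ c.re := by
        have := abs_re_le_norm (c - c₀)
        rw [Metric.mem_ball, dist_eq_norm] at hc
        rw [sub_re] at this
        linarith [neg_abs_le (c.re - c₀.re)]
      rw [h1, mul_right_comm, ← Real.rpow_add_one ht.ne', sub_add_cancel]
      gcongr
    · exact hbint _ (by positivity) _ (by linarith)
    · refine Filter.Eventually.of_forall fun t c _ => ?_
      have h : HasDerivAt (fun c : ℂ => -(c * t)) (-(1 * t)) c := ((hasDerivAt_id c).mul_const (t:ℂ)).neg
      exact h.cexp.const_mul _
  have hopen : IsOpen {c : ℂ | 0 < c.re} := isOpen_lt continuous_const continuous_re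
  have hA1 : AnalyticOnNhd ℂ G {c | 0 < c.re} := hdiff.analyticOnNhd hopen
  have hA2 : AnalyticOnNhd ℂ (fun c : ℂ => c ^ (-a : ℂ) * (Real.Gamma a : ℂ)) {c | 0 < c.re} := by
    apply DifferentiableOn.analyticOnNhd _ hopen
    intro c hc
    apply DifferentiableAt.differentiableWithinAt
    have : c ∈ slitPlane := Or.inl hc
    exact (((hasDerivAt_id c).cpow_const this).differentiableAt).mul_const _
  have hconv : IsPreconnected {c : ℂ | 0 < c.re} :=
    (convex_halfSpace_re_gt 0).isPreconnected
  have hreal : ∀ x : ℝ, 0 < x → G x = (x:ℂ) ^ (-a : ℂ) * (Real.Gamma a : ℂ) := by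
    intro x hx
    have := Complex.integral_cpow_mul_exp_neg_mul_Ioi (a := a) (r := x) (by simpa using ha) hx
    rw [Complex.Gamma_ofReal, one_div, inv_cpow _ _ (by rw [arg_ofReal_of_nonneg hx.le]; exact Real.pi_pos.ne), ← cpow_neg] at this
    rw [← this]
    apply setIntegral_congr_fun measurableSet_Ioi
    intro t ht
    simp only
    rw [ofReal_cpow (le_of_lt ht)]
    push_cast
    rfl
  refine hA1.eqOn_of_preconnected_of_frequently_eq hA2 hconv (z₀ := 1) (by simp) ?_ hc
  have ht : Filter.Tendsto (fun x : ℝ => (x : ℂ)) (nhdsWithin 1 {1}ᶜ) (nhdsWithin 1 {1}ᶜ) := by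
    refine tendsto_nhdsWithin_iff.2 ⟨?_, ?_⟩
    · exact (Complex.continuous_ofReal.tendsto' 1 1 (by simp)).mono_left nhdsWithin_le_nhds
    · filter_upwards [self_mem_nhdsWithin] with x hx
      simpa using hx
  apply ht.frequently
  apply Filter.Eventually.frequently
  have : ∀ᶠ x : ℝ in nhds 1, 0 < x := lt_mem_nhds one_pos
  filter_upwards [nhdsWithin_le_nhds this] with x hx
  exact hreal x hx
end
section
variable {θ : ℝ}
open Complex

lemma wmF_hasDeriv (hs : 0 < Real.sin θ) (z r : ℝ) :
    HasDerivAt (fun r : ℝ => exp (wmu θ r) * wmu θ r ^ (-z : ℂ))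
      (wmF θ z r - z * wmF θ (z + 1) r) r := by
  have hu : HasDerivAt (wmu θ) (exp (θ * I)) r := by
    have : HasDerivAt (fun r : ℝ => 1 + (r : ℂ) * exp (θ * I)) (1 * exp (θ * I)) r :=
      ((HasDerivAt.ofReal_comp (hasDerivAt_id r)).mul_const _).const_add _
    rw [one_mul] at this
    exact this
  have h1 := hu.cexp
  have h2 := HasDerivAt.comp_of_eq r (h₂ := fun w : ℂ => w ^ (-z : ℂ)) (h := wmu θ)
    ((hasDerivAt_id (wmu θ r)).cpow_const (c := (-z : ℂ)) (wmu_slit hs r)) hu rfl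
  refine (h1.mul h2).congr_deriv ?_
  simp only [wmF, Function.comp, id]
  push_cast
  rw [show (-z - 1 : ℂ) = -(z + 1) by ring]
  ring

lemma wmJ_rec (hs : 0 < Real.sin θ) (hc : Real.cos θ < 0) (z : ℝ) :
    (wmJ θ z).im = z * (wmJ θ (z + 1)).im := by
  have hint : IntegrableOn (fun r => wmF θ z r - z * wmF θ (z + 1) r) (Set.Ioi 0) :=
    (wmF_int hs hc z).sub ((wmF_int hs hc (z + 1)).const_mul _)
  have hint0 : IntegrableOn (fun r : ℝ => exp (wmu θ r) * wmu θ r ^ (-z : ℂ)) (Set.Ioi 0) := by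
    refine ((wmF_int hs hc z).mul_const (exp (θ * I))⁻¹).congr ?_
    refine Filter.Eventually.of_forall fun r => ?_
    simp only [wmF]
    field_simp [exp_ne_zero]
  have ht := tendsto_zero_of_hasDerivAt_of_integrableOn_Ioi (a := 0) (fun r _ => wmF_hasDeriv hs z r) hint hint0
  have h := integral_Ioi_of_hasDerivAt_of_tendsto' (a := 0) (fun r _ => wmF_hasDeriv hs z r) hint ht
  rw [integral_sub (wmF_int hs hc z) ((wmF_int hs hc (z + 1)).const_mul _), integral_const_mul] at h
  have h2 := congrArg Complex.im h
  have h3 : (0 - exp (wmu θ 0) * wmu θ 0 ^ (-z : ℂ)).im = 0 := by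
    have h4 : wmu θ 0 = 1 := by simp [wmu]
    rw [h4, one_cpow]
    have := exp_ofReal_im 1
    simpa using this
  rw [h3, sub_im, im_ofReal_mul] at h2
  unfold wmJ
  linarith

lemma wmJ_cont (hs : 0 < Real.sin θ) (hc : Real.cos θ < 0) : Continuous (wmJ θ) := by
  rw [continuous_iff_continuousAt]
  intro z₀
  unfold wmJ
  apply continuousAt_of_dominated (bound := fun r => ‖wmF θ (z₀ - 1) r‖ + ‖wmF θ (z₀ + 1) r‖)
  · exact Filter.Eventually.of_forall fun z => (wmF_cont hs z).aestronglyMeasurable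
  · filter_upwards [Icc_mem_nhds (show z₀ - 1 < z₀ by linarith) (show z₀ < z₀ + 1 by linarith)] with z hz
    refine Filter.Eventually.of_forall fun r => ?_
    rw [wmF_norm, wmF_norm, wmF_norm, ← mul_add, ← mul_add]
    have hp := wmu_pos hs r
    gcongr
    rcases le_total 1 ‖wmu θ r‖ with h | h
    · have : ‖wmu θ r‖ ^ (-z) ≤ ‖wmu θ r‖ ^ (-(z₀ - 1)) :=
        Real.rpow_le_rpow_of_exponent_le h (by linarith [hz.1])
      have : 0 < ‖wmu θ r‖ ^ (-(z₀ + 1)) := by positivity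
      linarith
    · have : ‖wmu θ r‖ ^ (-z) ≤ ‖wmu θ r‖ ^ (-(z₀ + 1)) :=
        Real.rpow_le_rpow_of_exponent_ge hp h (by linarith [hz.2])
      have : 0 < ‖wmu θ r‖ ^ (-(z₀ - 1)) := by positivity
      linarith
  · exact (wmF_int hs hc _).norm.add (wmF_int hs hc _).norm
  · refine Filter.Eventually.of_forall fun r => ?_
    unfold wmF
    have : Continuous fun z : ℝ => wmu θ r ^ (-z : ℂ) :=
      Continuous.const_cpow (by fun_prop) (Or.inl (slitPlane_ne_zero (wmu_slit hs r)))
    have h2 : Continuous fun z : ℝ => exp (wmu θ r) * wmu θ r ^ (-z : ℂ) * exp (θ * I) := by fun_prop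
    exact h2.continuousAt

/-- shift data -/
noncomputable def wmV (θ ε r : ℝ) : ℂ := ε + r * exp (θ * I)
noncomputable def wmG (θ w ε r : ℝ) : ℂ := exp (wmV θ ε r) * wmV θ ε r ^ (w : ℂ)
noncomputable def wmD (θ w ε r : ℝ) : ℂ :=
  exp (wmV θ ε r) * (wmV θ ε r ^ (w : ℂ) + w * wmV θ ε r ^ ((w - 1 : ℝ) : ℂ))

lemma wmG_hasDeriv (w : ℝ) {v : ℂ} (hv : v ∈ slitPlane) :
    HasDerivAt (fun v : ℂ => exp v * v ^ (w : ℂ)) (exp v * (v ^ (w : ℂ) + w * v ^ ((w - 1 : ℝ) : ℂ))) v := by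
  have h := (Complex.hasDerivAt_exp v).mul ((hasDerivAt_id v).cpow_const (c := (w : ℂ)) hv)
  refine h.congr_deriv ?_
  push_cast
  simp only [id]
  ring

lemma wmG_r (hs : 0 < Real.sin θ) (w : ℝ) {ε r : ℝ} (h : 0 < ε ∨ (0 ≤ ε ∧ 0 < r)) :
    HasDerivAt (fun r : ℝ => wmG θ w ε r) (wmD θ w ε r * exp (θ * I)) r := by
  have hu : HasDerivAt (wmV θ ε) (exp (θ * I)) r := by
    have : HasDerivAt (fun r : ℝ => (ε:ℂ) + (r : ℂ) * exp (θ * I)) (1 * exp (θ * I)) r :=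
      ((HasDerivAt.ofReal_comp (hasDerivAt_id r)).mul_const _).const_add _
    rw [one_mul] at this
    exact this
  exact HasDerivAt.comp_of_eq r (wmG_hasDeriv w (wm_slit hs r h)) hu rfl

lemma wmG_e (hs : 0 < Real.sin θ) (w : ℝ) {ε r : ℝ} (h : 0 < ε ∨ (0 ≤ ε ∧ 0 < r)) :
    HasDerivAt (fun ε : ℝ => wmG θ w ε r) (wmD θ w ε r) ε := by
  have hu : HasDerivAt (fun ε => wmV θ ε r) 1 ε := by
    have : HasDerivAt (fun ε : ℝ => (ε:ℂ) + (r : ℂ) * exp (θ * I)) 1 ε :=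
      (HasDerivAt.ofReal_comp (hasDerivAt_id ε)).add_const _
    simpa [wmV] using this
  have := HasDerivAt.comp_of_eq ε (wmG_hasDeriv w (wm_slit hs r h)) hu rfl
  rw [mul_one] at this
  exact this

lemma wmV_re (ε r : ℝ) : (wmV θ ε r).re = ε + r * Real.cos θ := by
  simp [wmV, exp_ofReal_mul_I_re]

lemma wmV_bound {w : ℝ} (hw : 0 ≤ w) {ε r : ℝ} (h0 : 0 ≤ ε) (h1 : ε ≤ 1) (hr : 0 ≤ r) :
    ‖exp (wmV θ ε r)‖ ≤ Real.exp 1 * Real.exp (-(-Real.cos θ) * r) ∧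
    ‖wmV θ ε r ^ (w : ℂ)‖ ≤ (1 + r) ^ w := by
  constructor
  · rw [norm_exp, wmV_re, ← Real.exp_add]
    apply Real.exp_le_exp.2
    linarith
  · rw [norm_cpow_real]
    have : ‖wmV θ ε r‖ ≤ 1 + r := (wm_norm_up' ε r hr h0).trans (by linarith)
    gcongr

noncomputable def wmB (θ w r : ℝ) : ℝ := Real.exp 1 * Real.exp (-(-Real.cos θ) * r) * (1 + r) ^ w

lemma wmB_int (hc : Real.cos θ < 0) (w : ℝ) : IntegrableOn (wmB θ w) (Set.Ioi 0) := by
  have h := wm_int (c := -Real.cos θ) (α := 0) (x := 0) (p := w) (by linarith) one_pos (v := fun r => 1 + |r|)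
    (by fun_prop) (fun r => by positivity) (fun r => by linarith [le_abs_self r])
    (fun r hr => by rw [abs_of_nonneg hr, add_comm])
  refine IntegrableOn.congr_fun (h.const_mul (Real.exp 1)) (fun r hr => ?_) measurableSet_Ioi
  simp only [wmB, abs_of_pos (Set.mem_Ioi.1 hr)]
  simp
  ring

lemma wmG_bound {w : ℝ} (hw : 0 ≤ w) {ε r : ℝ} (h0 : 0 ≤ ε) (h1 : ε ≤ 1) (hr : 0 ≤ r) :
    ‖wmG θ w ε r‖ ≤ wmB θ w r := by
  unfold wmG wmB
  rw [norm_mul]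
  obtain ⟨a, b⟩ := wmV_bound (θ := θ) hw h0 h1 hr
  gcongr

lemma wmD_bound {w : ℝ} (hw : 1 ≤ w) {ε r : ℝ} (h0 : 0 ≤ ε) (h1 : ε ≤ 1) (hr : 0 ≤ r) :
    ‖wmD θ w ε r‖ ≤ wmB θ w r + w * wmB θ (w - 1) r := by
  have e1 : wmD θ w ε r = wmG θ w ε r + w * wmG θ (w - 1) ε r := by
    unfold wmD wmG; ring
  rw [e1]
  refine (norm_add_le _ _).trans ?_
  rw [norm_mul, norm_real, Real.norm_of_nonneg (by linarith)]
  gcongr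
  · exact wmG_bound (by linarith) h0 h1 hr
  · exact wmG_bound (by linarith) h0 h1 hr

lemma wmV_cont : Continuous fun p : ℝ × ℝ => wmV θ p.2 p.1 := by unfold wmV; fun_prop

lemma wmG_contOn (hs : 0 < Real.sin θ) (w : ℝ) :
    ContinuousOn (fun p : ℝ × ℝ => wmG θ w p.2 p.1) (Set.Ioi 0 ×ˢ Set.Ici 0) := by
  unfold wmG
  apply ContinuousOn.mul
  · exact wmV_cont.cexp.continuousOn
  · exact wmV_cont.continuousOn.cpow continuousOn_const
      (fun p hp => wm_slit hs p.1 (Or.inr ⟨hp.2, hp.1⟩))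

lemma wmG_int (hs : 0 < Real.sin θ) (hc : Real.cos θ < 0) {w : ℝ} (hw : 0 ≤ w) {ε : ℝ} (h0 : 0 ≤ ε) (h1 : ε ≤ 1) :
    IntegrableOn (wmG θ w ε) (Set.Ioi 0) := by
  refine Integrable.mono' (wmB_int hc w) ?_ ?_
  · apply ContinuousOn.aestronglyMeasurable _ measurableSet_Ioi
    exact (wmG_contOn hs w).comp (f := fun r : ℝ => (r, ε)) (by fun_prop) (fun r hr => ⟨hr, h0⟩)
  · filter_upwards [ae_restrict_mem measurableSet_Ioi] with r hr
    exact wmG_bound hw h0 h1 (le_of_lt hr)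

lemma wmD_eq (w ε r : ℝ) : wmD θ w ε r = wmG θ w ε r + w * wmG θ (w - 1) ε r := by
    unfold wmD wmG; ring

lemma wmD_int (hs : 0 < Real.sin θ) (hc : Real.cos θ < 0) {w : ℝ} (hw : 1 ≤ w) {ε : ℝ} (h0 : 0 ≤ ε) (h1 : ε ≤ 1) :
    IntegrableOn (wmD θ w ε) (Set.Ioi 0) := by
  have := (wmG_int hs hc (w := w) (by linarith) h0 h1).add ((wmG_int hs hc (w := w - 1) (by linarith) h0 h1).const_mul (w : ℂ))
  refine this.congr (Filter.Eventually.of_forall fun r => ?_)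
  simp [wmD_eq]

lemma wm_shift (hs : 0 < Real.sin θ) (hc : Real.cos θ < 0) {w : ℝ} (hw : 1 ≤ w) :
    (∫ r in Set.Ioi (0:ℝ), wmG θ w 1 r * exp (θ * I)).im =
      (∫ r in Set.Ioi (0:ℝ), wmG θ w 0 r * exp (θ * I)).im := by
  have hprod : Integrable (Function.uncurry fun (r ε : ℝ) => wmD θ w ε r * exp (θ * I))
      ((volume.restrict (Set.Ioi 0)).prod (volume.restrict (Set.Ioc 0 1))) := by
    have hB : Integrable (fun r => wmB θ w r + w * wmB θ (w - 1) r) (volume.restrict (Set.Ioi 0)) :=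
      (wmB_int hc w).add ((wmB_int hc (w - 1)).const_mul w)
    refine Integrable.mono' (hB.comp_fst (volume.restrict (Set.Ioc 0 1))) ?_ ?_
    · rw [Measure.prod_restrict]
      apply ContinuousOn.aestronglyMeasurable _ (measurableSet_Ioi.prod measurableSet_Ioc)
      apply ContinuousOn.mono (s := Set.Ioi 0 ×ˢ Set.Ici 0) _ (Set.prod_mono le_rfl (fun x hx => le_of_lt hx.1))
      have h1 := wmG_contOn hs w
      have h2 := wmG_contOn hs (w - 1)
      simp only [Function.uncurry_def, wmD_eq]
      fun_prop
    · rw [Measure.prod_restrict]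
      filter_upwards [ae_restrict_mem (measurableSet_Ioi.prod measurableSet_Ioc)] with p hp
      simp only [Function.uncurry_def]
      rw [norm_mul, norm_exp_ofReal_mul_I, mul_one]
      exact wmD_bound hw (le_of_lt hp.2.1) hp.2.2 (le_of_lt hp.1)
  have hswap := integral_integral_swap hprod
  have hL : ∫ r in Set.Ioi (0:ℝ), ∫ ε in Set.Ioc (0:ℝ) 1, wmD θ w ε r * exp (θ * I)
      = ∫ r in Set.Ioi (0:ℝ), (wmG θ w 1 r * exp (θ * I) - wmG θ w 0 r * exp (θ * I)) := by
    apply setIntegral_congr_fun measurableSet_Ioi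
    intro r hr
    simp only
    rw [integral_mul_const, ← sub_mul, ← intervalIntegral.integral_of_le zero_le_one]
    congr 1
    apply intervalIntegral.integral_eq_sub_of_hasDerivAt (f := fun ε => wmG θ w ε r)
    · intro ε hε
      rw [Set.uIcc_of_le zero_le_one] at hε
      exact wmG_e hs w (Or.inr ⟨hε.1, hr⟩)
    · apply ContinuousOn.intervalIntegrable
      rw [Set.uIcc_of_le zero_le_one]
      have h1 : ∀ w : ℝ, ContinuousOn (fun ε => wmG θ w ε r) (Set.Icc 0 1) := fun w =>
        (wmG_contOn hs w).comp (f := fun ε : ℝ => (r, ε)) (by fun_prop) (fun ε hε => ⟨hr, hε.1⟩)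
      simp only [wmD_eq]
      exact (h1 w).add (continuousOn_const.mul (h1 (w - 1)))
  have hR : ∫ ε in Set.Ioc (0:ℝ) 1, ∫ r in Set.Ioi (0:ℝ), wmD θ w ε r * exp (θ * I)
      = ∫ ε in Set.Ioc (0:ℝ) 1, ((-(Real.exp ε * ε ^ w) : ℝ) : ℂ) := by
    apply setIntegral_congr_fun measurableSet_Ioc
    intro ε hε
    simp only
    have hi := (wmD_int hs hc hw (le_of_lt hε.1) hε.2).mul_const (exp (θ * I))
    have ht := tendsto_zero_of_hasDerivAt_of_integrableOn_Ioi (a := 0)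
      (fun r _ => wmG_r hs w (r := r) (Or.inl hε.1)) hi (wmG_int hs hc (by linarith) (le_of_lt hε.1) hε.2)
    rw [integral_Ioi_of_hasDerivAt_of_tendsto' (fun r _ => wmG_r hs w (r := r) (Or.inl hε.1)) hi ht]
    unfold wmG wmV
    push_cast
    rw [ofReal_cpow (le_of_lt hε.1)]
    simp
  rw [hL, hR, integral_complex_ofReal, integral_sub
    ((wmG_int hs hc (by linarith) zero_le_one le_rfl).mul_const _)
    ((wmG_int hs hc (by linarith) le_rfl zero_le_one).mul_const _)] at hswap
  have := congrArg Complex.im hswap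
  rw [sub_im, ofReal_im] at this
  linarith

end
section
variable {θ : ℝ}
open Complex

lemma wm_zero_int (h0 : 0 < θ) (h1 : θ < Real.pi) (hc : Real.cos θ < 0) {w : ℝ} (hw : 0 ≤ w) :
    (∫ r in Set.Ioi (0:ℝ), wmG θ w 0 r * exp (θ * I)).im =
      Real.sin (Real.pi * (w + 1)) * Real.Gamma (w + 1) := by
  have hcre : 0 < (-exp (θ * I)).re := by
    rw [neg_re, exp_ofReal_mul_I_re]; linarith
  have hg := wm_cgam (a := w + 1) (by linarith) hcre
  have hlog : log (exp (θ * I)) = θ * I := by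
    apply log_exp <;> simp <;> linarith
  have hlog2 : log (-exp (θ * I)) = (θ - Real.pi) * I := by
    have : -exp (θ * I) = exp ((θ - Real.pi) * I) := by
      rw [sub_mul, exp_sub, exp_pi_mul_I, div_neg, div_one]
    rw [this]
    apply log_exp <;> simp <;> linarith [Real.pi_pos]
  have hne : -exp (θ * I) ≠ 0 := neg_ne_zero.2 (exp_ne_zero _)
  have key : ∫ r in Set.Ioi (0:ℝ), wmG θ w 0 r * exp (θ * I)
      = ∫ r in Set.Ioi (0:ℝ), exp (θ * I * (w + 1)) * (((r ^ (w + 1 - 1) : ℝ) : ℂ) * exp (-(-exp (θ * I) * r))) := by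
    apply setIntegral_congr_fun measurableSet_Ioi
    intro r hr
    replace hr : 0 < r := hr
    have hV : wmV θ 0 r = r * exp (θ * I) := by simp [wmV]
    have hre : (r : ℂ) * exp (θ * I) ≠ 0 := mul_ne_zero (ofReal_ne_zero.2 hr.ne') (exp_ne_zero _)
    have hpow : ((r : ℂ) * exp (θ * I)) ^ (w : ℂ) = ((r ^ w : ℝ) : ℂ) * exp (θ * I * w) := by
      rw [cpow_def_of_ne_zero hre, log_ofReal_mul hr (exp_ne_zero _), hlog, add_mul, exp_add,
        Real.rpow_def_of_pos hr]
      push_cast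
      rfl
    simp only [wmG, hV, hpow]
    rw [add_sub_cancel_right, mul_add, exp_add, mul_one]
    have : -(-exp (θ * I) * r) = r * exp (θ * I) := by ring
    rw [this]
    ring
  rw [key, integral_const_mul, hg, cpow_def_of_ne_zero hne, hlog2, ← mul_assoc, ← exp_add]
  have : (θ * I * (w + 1) + (θ - Real.pi) * I * -((w + 1 : ℝ) : ℂ)) = ((Real.pi * (w + 1) : ℝ) : ℂ) * I := by
    push_cast; ring
  rw [this, im_mul_ofReal, exp_ofReal_mul_I_im]

lemma wm_hankel (h0 : 0 < θ) (h1 : θ < Real.pi) (hc : Real.cos θ < 0) (z : ℝ) :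
    (wmJ θ z).im = Real.pi * (Real.Gamma z)⁻¹ := by
  have hs := Real.sin_pos_of_pos_of_lt_pi h0 h1
  have hbase : ∀ z : ℝ, z < -1 → (∀ m : ℤ, z ≠ m) → (wmJ θ z).im = Real.pi * (Real.Gamma z)⁻¹ := by
    intro z hz hm
    have e1 : wmJ θ z = ∫ r in Set.Ioi (0:ℝ), wmG θ (-z) 1 r * exp (θ * I) := by
      unfold wmJ wmF wmG wmV wmu
      simp
    rw [e1, wm_shift hs hc (by linarith), wm_zero_int h0 h1 hc (by linarith)]
    have hr := Real.Gamma_mul_Gamma_one_sub z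
    have hG : Real.Gamma z ≠ 0 := Real.Gamma_ne_zero fun m => by simpa using hm (-m)
    have hG1 : Real.Gamma (1 - z) ≠ 0 := Real.Gamma_ne_zero fun m h => by
      apply hm (1 + m); push_cast; linarith
    have hsin : Real.sin (Real.pi * z) ≠ 0 := by
      intro h
      rw [h, div_zero] at hr
      exact mul_ne_zero hG hG1 hr
    have hsin2 : Real.sin (Real.pi * (-z + 1)) = Real.sin (Real.pi * z) := by
      rw [show Real.pi * (-z + 1) = Real.pi - Real.pi * z by ring, Real.sin_pi_sub]
    rw [hsin2, show -z + 1 = 1 - z by ring]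
    rw [eq_div_iff hsin] at hr
    rw [eq_mul_inv_iff_mul_eq₀ hG]
    linarith
  have hnon : ∀ n : ℕ, ∀ z : ℝ, z < n - 1 → (∀ m : ℤ, z ≠ m) → (wmJ θ z).im = Real.pi * (Real.Gamma z)⁻¹ := by
    intro n
    induction n with
    | zero => intro z hz; exact hbase z (by simpa using hz)
    | succ n ih =>
      intro z hz hm
      have hz1 : z - 1 ≠ 0 := fun h => hm 1 (by push_cast; linarith)
      have h := ih (z - 1) (by push_cast at hz; linarith) (fun m h => hm (m + 1) (by push_cast; linarith))
      rw [wmJ_rec hs hc, sub_add_cancel] at h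
      have hg := Real.Gamma_add_one hz1
      rw [sub_add_cancel] at hg
      rw [hg, mul_inv]
      have : (wmJ θ z).im = (z - 1)⁻¹ * ((z - 1) * (wmJ θ z).im) := by field_simp
      rw [this, h]
      ring
  have hdense : Dense (Set.range (fun m : ℤ => (m : ℝ)))ᶜ := (Set.countable_range _).dense_compl ℝ
  have hcont : Continuous fun z : ℝ => Real.pi * (Real.Gamma z)⁻¹ := by
    have : Continuous fun z : ℝ => ((Complex.Gamma z)⁻¹).re :=
      continuous_re.comp (Complex.differentiable_one_div_Gamma.continuous.comp continuous_ofReal)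
    have h2 : (fun z : ℝ => ((Complex.Gamma z)⁻¹).re) = fun z => (Real.Gamma z)⁻¹ := by
      funext z
      rw [Complex.Gamma_ofReal, ← ofReal_inv, ofReal_re]
    rw [h2] at this
    exact continuous_const.mul this
  have := Continuous.ext_on hdense (continuous_im.comp (wmJ_cont hs hc)) hcont (by
    intro z hz
    obtain ⟨n, hn⟩ := exists_nat_gt (z + 1)
    exact hnon n z (by linarith) (fun m h => hz ⟨m, h.symm⟩))
  exact congrFun this z

lemma wm_series (h0 : 0 < θ) (h1 : θ < Real.pi) (hc : Real.cos θ < 0) {α : ℝ} (hα : α < 1) (β : ℝ)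
    {x : ℝ} (hx : 0 ≤ x) :
    wright (-α) β (-x) = Real.pi⁻¹ *
      (∫ r in Set.Ioi (0:ℝ), wmF θ β r * exp (-(wmu θ r ^ (α : ℂ) * x))).im := by
  have hs := Real.sin_pos_of_pos_of_lt_pi h0 h1
  have hF : ∀ (n : ℕ) (r : ℝ), wmF θ (β + -α * n) r = wmF θ β r * (wmu θ r ^ (α : ℂ)) ^ n := by
    intro n r
    unfold wmF
    rw [← cpow_mul_nat]
    have : (-((β + -α * n : ℝ) : ℂ)) = -β + α * n := by push_cast; ring
    rw [this, cpow_add _ _ (slitPlane_ne_zero (wmu_slit hs r))]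
    ring
  have hfac : ∀ (n : ℕ) (r : ℝ), wmF θ β r * ((-(wmu θ r ^ (α : ℂ) * x)) ^ n / (n.factorial : ℂ))
      = (((-x) ^ n / n.factorial : ℝ) : ℂ) * wmF θ (β + -α * n) r := by
    intro n r
    rw [hF]
    push_cast
    rw [show -(wmu θ r ^ (α : ℂ) * x) = wmu θ r ^ (α : ℂ) * (-x) by ring, mul_pow]
    ring
  have hsum : ∀ r : ℝ, HasSum (fun n : ℕ => ‖wmF θ β r‖ * ((x * ‖wmu θ r‖ ^ α) ^ n / (n.factorial : ℝ)))
      (‖wmF θ β r‖ * Real.exp (x * ‖wmu θ r‖ ^ α)) := by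
    intro r
    rw [Real.exp_eq_exp_ℝ]
    have h := NormedSpace.expSeries_div_hasSum_exp (x * ‖wmu θ r‖ ^ α)
    exact HasSum.mul_left ‖wmF θ β r‖ h
  have hmain : HasSum (fun n : ℕ => ∫ r in Set.Ioi (0:ℝ), (((-x) ^ n / n.factorial : ℝ) : ℂ) * wmF θ (β + -α * n) r)
      (∫ r in Set.Ioi (0:ℝ), wmF θ β r * exp (-(wmu θ r ^ (α : ℂ) * x))) := by
    apply hasSum_integral_of_dominated_convergence
      (fun n r => ‖wmF θ β r‖ * ((x * ‖wmu θ r‖ ^ α) ^ n / (n.factorial : ℝ)))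
    · intro n
      exact (continuous_const.mul (wmF_cont hs _)).aestronglyMeasurable
    · intro n
      refine Filter.Eventually.of_forall fun r => ?_
      rw [← hfac, norm_mul, norm_div, norm_pow, norm_neg, norm_mul, norm_cpow_real, norm_real,
        Real.norm_of_nonneg hx, norm_natCast, mul_comm x]
    · exact Filter.Eventually.of_forall fun r => (hsum r).summable
    · simp only [fun r => (hsum r).tsum_eq]
      refine ((wm_int1 hs hc (-β) x α hα).const_mul (Real.exp 1)).congr ?_
      refine Filter.Eventually.of_forall fun r => ?_
      simp only [wmF_norm]
      ring
    · refine Filter.Eventually.of_forall fun r => ?_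
      simp only [← hfac]
      rw [Complex.exp_eq_exp_ℂ]
      have h := NormedSpace.expSeries_div_hasSum_exp (-(wmu θ r ^ (α : ℂ) * x))
      exact HasSum.mul_left (wmF θ β r) h
  have him := (Complex.hasSum_im hmain).mul_left Real.pi⁻¹
  rw [← him.tsum_eq]
  unfold wright
  congr 1
  funext n
  rw [integral_const_mul, im_ofReal_mul]
  have := wm_hankel h0 h1 hc (β + -α * n)
  unfold wmJ at this
  rw [this]
  have := Real.pi_ne_zero
  rw [← div_div, div_eq_mul_inv _ (Real.Gamma _)]
  field_simp

lemma wm_final (h0 : 0 < θ) (h1 : θ < Real.pi) (hc : Real.cos θ < 0) {α : ℝ} (hα0 : 0 < α) (hα : α < 1)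
    (hαθ : α * θ < Real.pi / 2) (β : ℝ) {s : ℝ} (hss : -1 < s) :
    IntegrableOn (fun x => x ^ s * wright (-α) β (-x)) (Set.Ioi 0) ∧
    ∫ x in Set.Ioi 0, x ^ s * wright (-α) β (-x) =
      Real.Gamma (1 + s) / Real.Gamma (α + β + α * s) := by
  have hs := Real.sin_pos_of_pos_of_lt_pi h0 h1
  have hcos : 0 < Real.cos (α * θ) := Real.cos_pos_of_mem_Ioo ⟨by nlinarith [Real.pi_pos], hαθ⟩
  set δ : ℝ := Real.sin θ ^ α * Real.cos (α * θ) with hδ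
  have hδ0 : 0 < δ := by positivity
  have hre : ∀ r : ℝ, 0 ≤ r → δ ≤ (wmu θ r ^ (α : ℂ)).re := by
    intro r hr
    obtain ⟨a1, a2, a3⟩ := wm_arg h0 h1 hr
    rw [cpow_ofReal_re]
    have : Real.cos (α * θ) ≤ Real.cos ((wmu θ r).arg * α) :=
      Real.cos_le_cos_of_nonneg_of_le_pi (by positivity) (by linarith [Real.pi_pos]) (by nlinarith)
    rw [hδ]
    gcongr
  have hup : Continuous fun r => wmu θ r ^ (α : ℂ) :=
    wmu_cont.cpow (by fun_prop) (fun r => wmu_slit hs r)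
  set K : ℝ → ℝ → ℂ := fun x r => ((x ^ s : ℝ) : ℂ) * (wmF θ β r * exp (-(wmu θ r ^ (α : ℂ) * x))) with hK
  have hKint : Integrable (Function.uncurry K) ((volume.restrict (Set.Ioi 0)).prod (volume.restrict (Set.Ioi 0))) := by
    have hg : IntegrableOn (fun x : ℝ => x ^ s * Real.exp (-δ * x)) (Set.Ioi 0) := by
      simpa using integrableOn_rpow_mul_exp_neg_mul_rpow (p := 1) hss one_pos hδ0
    refine Integrable.mono' (hg.mul_prod (wmF_int hs hc β).norm) ?_ ?_
    · apply Measurable.aestronglyMeasurable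
      have h2 := (wmF_cont hs β).measurable
      have h3 := hup.measurable
      have h4 := (wmu_cont (θ := θ)).measurable
      simp only [hK, Function.uncurry_def]
      fun_prop
    · rw [Measure.prod_restrict]
      filter_upwards [ae_restrict_mem (measurableSet_Ioi.prod measurableSet_Ioi)] with p hp
      have hx : 0 < p.1 := hp.1
      have hr : 0 < p.2 := hp.2
      simp only [hK, Function.uncurry_def]
      rw [norm_mul, norm_mul, norm_exp, norm_real, Real.norm_of_nonneg (by positivity), mul_assoc, mul_comm ‖wmF θ β p.2‖]
      gcongr
      rw [neg_re, re_mul_ofReal]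
      nlinarith [hre p.2 hr.le]
  have heq : ∀ x ∈ Set.Ioi (0:ℝ), Real.pi⁻¹ * (∫ r in Set.Ioi (0:ℝ), K x r).im = x ^ s * wright (-α) β (-x) := by
    intro x hx
    rw [wm_series h0 h1 hc hα β (le_of_lt hx)]
    simp only [hK]
    rw [integral_const_mul, im_ofReal_mul]
    ring
  have hI : IntegrableOn (fun x => ∫ r in Set.Ioi (0:ℝ), K x r) (Set.Ioi 0) := hKint.integral_prod_left
  have hI2 : IntegrableOn (fun x => Real.pi⁻¹ * (∫ r in Set.Ioi (0:ℝ), K x r).im) (Set.Ioi 0) :=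
    (hI.im).const_mul _
  refine ⟨hI2.congr_fun heq measurableSet_Ioi, ?_⟩
  rw [← setIntegral_congr_fun measurableSet_Ioi heq, integral_const_mul]
  have him : ∫ x in Set.Ioi (0:ℝ), (∫ r in Set.Ioi (0:ℝ), K x r).im = (∫ x in Set.Ioi (0:ℝ), ∫ r in Set.Ioi (0:ℝ), K x r).im :=
    integral_im hI
  rw [him, integral_integral_swap hKint]
  have hinner : ∫ r in Set.Ioi (0:ℝ), ∫ x in Set.Ioi (0:ℝ), K x r
      = ∫ r in Set.Ioi (0:ℝ), (Real.Gamma (1 + s) : ℂ) * wmF θ (α + β + α * s) r := by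
    apply setIntegral_congr_fun measurableSet_Ioi
    intro r hr
    have hr : 0 < r := hr
    have hg := wm_cgam (a := 1 + s) (by linarith) (c := wmu θ r ^ (α : ℂ)) (hδ0.trans_le (hre r hr.le))
    obtain ⟨a1, a2, a3⟩ := wm_arg h0 h1 hr.le
    have e1 : ∀ x : ℝ, K x r = wmF θ β r * (((x ^ (1 + s - 1) : ℝ) : ℂ) * exp (-(wmu θ r ^ (α : ℂ) * x))) := by
      intro x
      simp only [hK]
      rw [add_sub_cancel_left]
      ring
    simp only [e1]
    rw [integral_const_mul, hg, ← cpow_mul]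
    · unfold wmF
      have : (-((α + β + α * s : ℝ) : ℂ)) = -β + α * (-((1 + s : ℝ) : ℂ)) := by push_cast; ring
      rw [this, cpow_add _ _ (slitPlane_ne_zero (wmu_slit hs r))]
      ring
    · rw [im_mul_ofReal, log_im]; nlinarith [Real.pi_pos]
    · rw [im_mul_ofReal, log_im]; nlinarith [Real.pi_pos]
  rw [hinner, integral_const_mul, im_ofReal_mul]
  have := wm_hankel h0 h1 hc (α + β + α * s)
  unfold wmJ at this
  rw [this]
  have := Real.pi_ne_zero
  field_simp
end
/-- Mellin transform identity: for `α ∈ (0,1)`, `β ≥ 0` and `s > -1`,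
`∫_0^∞ x^s φ(-α, β, -x) dx = Γ(1+s)/Γ(α+β+αs)`, the integral being absolutely
convergent. -/
theorem wright_mellin (α β s : ℝ) (hα : α ∈ Set.Ioo (0 : ℝ) 1) (hβ : 0 ≤ β)
    (hs : -1 < s) :
    IntegrableOn (fun x => x ^ s * wright (-α) β (-x)) (Set.Ioi 0) ∧
    ∫ x in Set.Ioi 0, x ^ s * wright (-α) β (-x) =
      Real.Gamma (1 + s) / Real.Gamma (α + β + α * s) := by
  obtain ⟨h0, h1⟩ := hα
  have hpi := Real.pi_pos
  have hlt : Real.pi / 2 < min Real.pi (Real.pi / 2 / α) := by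
    apply lt_min (by linarith)
    rw [lt_div_iff₀ h0]
    nlinarith
  obtain ⟨θ, hθ1, hθ2⟩ := exists_between hlt
  have hθ3 := hθ2.trans_le (min_le_left _ _)
  have hθ4 := hθ2.trans_le (min_le_right _ _)
  rw [lt_div_iff₀ h0] at hθ4
  exact wm_final (θ := θ) (by linarith) hθ3
    (Real.cos_neg_of_pi_div_two_lt_of_lt hθ1 (by linarith)) h0 h1 (by linarith) β hs
end
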